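/- Let L = {L_1,...,L_n} be constant-coefficient complex vector fields of the normalized form L_j = ∂_{x_j} + Σ_k a_{jk}∂_{x_{n+k}}, n ≥ 2, and 1 < p < ∞. For every φ ∈ C_c^∞(B(0,1)) there exist smooth vector fields V_2, W_2 with φ = V_2 · W_2 such that: supp W_2 ⊂ B(0,1), supp V_2 ⊂ B(0,2), div_{L*} V_2 = 0, ‖V_2‖_{L^p} ≤ C_2 with C_2 independent of φ, ‖W_2‖_{L^{p'}} = ‖φ‖_{L^{p'}}, and ‖curl_L W_2‖_{L^{p'}} ≤ 2‖∇_L φ‖_{L^{p'}}. -/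

import Mathlib

open MeasureTheory Finset Metric
open scoped ENNReal NNReal ComplexConjugate

noncomputable section

/-- `ℝ^N` with the Euclidean norm. -/
abbrev RN (N : ℕ) := EuclideanSpace ℝ (Fin N)

/-- Partial derivative of a complex-valued function on `ℝ^N`. -/
def pd {N : ℕ} (i : Fin N) (f : RN N → ℂ) (x : RN N) : ℂ :=
  fderiv ℝ f x (EuclideanSpace.single i 1)

/-- Partial derivative of a real-valued function on `ℝ^N`. -/
def pdR {N : ℕ} (i : Fin N) (f : RN N → ℝ) (x : RN N) : ℝ :=
  fderiv ℝ f x (EuclideanSpace.single i 1)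

/-- Constant coefficient complex vector field with coefficients `c : Fin N → ℂ`,
applied to a function `f`:  `L f = ∑ i, c i • ∂_i f`. -/
def vf {N : ℕ} (c : Fin N → ℂ) (f : RN N → ℂ) (x : RN N) : ℂ :=
  ∑ i, c i * pd i f x

/-- Formal adjoint `L* = - conj(L)` of the constant coefficient vector field `c`. -/
def vfStar {N : ℕ} (c : Fin N → ℂ) (f : RN N → ℂ) (x : RN N) : ℂ :=
  - vf (fun i => conj (c i)) f x

/-- Test functions: smooth and compactly supported (complex valued). -/
def IsTest {N : ℕ} (u : RN N → ℂ) : Prop := ContDiff ℝ (⊤ : ℕ∞) u ∧ HasCompactSupport u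

/-- Test functions: smooth and compactly supported (real valued). -/
def IsTestR {N : ℕ} (u : RN N → ℝ) : Prop := ContDiff ℝ (⊤ : ℕ∞) u ∧ HasCompactSupport u

/-- Classical ellipticity of `Δ_L = ∑ L_j* L_j` for the system with coefficient
matrix `c`: the principal symbol `∑_j |∑_i c_{ji} ξ_i|²` does not vanish for `ξ ≠ 0`. -/
def EllipticSystem {n N : ℕ} (c : Fin n → Fin N → ℂ) : Prop :=
  ∀ ξ : Fin N → ℝ, ξ ≠ 0 → ∑ j, ‖∑ i, c j i * (ξ i : ℂ)‖ ^ 2 ≠ 0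

/-- `div_{L*} V = f` in the sense of distributions: tested against all test functions,
`⟨div_{L*} V, u⟩ = ∫ V ⋅ conj (∇_L u) = ∫ f conj u`. -/
def DivLStarEq {n N : ℕ} (c : Fin n → Fin N → ℂ) (V : Fin n → RN N → ℂ)
    (f : RN N → ℂ) : Prop :=
  ∀ u : RN N → ℂ, IsTest u →
    ∫ x, ∑ j, V j x * conj (vf (c j) u x) = ∫ x, f x * conj (u x)

/-- `curl_L W = A` in the sense of distributions:
`⟨(curl_L W)_{ij}, u⟩ = -∫ (W_j L_i u - W_i L_j u) = ∫ A_{ij} u`. -/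
def CurlLEq {n N : ℕ} (c : Fin n → Fin N → ℂ) (W : Fin n → RN N → ℂ)
    (A : Fin n → Fin n → RN N → ℂ) : Prop :=
  ∀ i j, ∀ u : RN N → ℂ, IsTest u →
    -∫ x, (W j x * vf (c i) u x - W i x * vf (c j) u x) = ∫ x, A i j x * u x

/-- `L^p` norm of a vector field, with the Euclidean norm in the fibers. -/
def vLpNorm {𝕜 : Type*} [RCLike 𝕜] {n N : ℕ} (V : Fin n → RN N → 𝕜) (p : ℝ≥0∞) : ℝ≥0∞ :=
  eLpNorm (fun x => ((WithLp.equiv 2 (Fin n → 𝕜)).symm fun j => V j x)) p volume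

/-- `L^p` norm of a matrix-valued field. -/
def mLpNorm {𝕜 : Type*} [RCLike 𝕜] {n N : ℕ} (A : Fin n → Fin n → RN N → 𝕜)
    (p : ℝ≥0∞) : ℝ≥0∞ :=
  eLpNorm (fun x => ((WithLp.equiv 2 (Fin n × Fin n → 𝕜)).symm
    fun ij => A ij.1 ij.2 x)) p volume

/-- The dilated bump `φ_t(x - y) = t^{-N} φ((x-y)/t)`. -/
def dil {N : ℕ} (φ : RN N → ℝ) (t : ℝ) (x y : RN N) : ℝ :=
  (t ^ N)⁻¹ * φ (t⁻¹ • (x - y))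

/-- The local (truncated) maximal function `m_φ g (x) = sup_{0<t<1} |g * φ_t (x)|`. -/
def mphi {N : ℕ} (φ : RN N → ℝ) (g : RN N → ℂ) (x : RN N) : ℝ≥0∞ :=
  ⨆ (t : ℝ) (_ : t ∈ Set.Ioo (0:ℝ) 1), ENNReal.ofReal ‖∫ y, g y * (dil φ t x y : ℂ)‖

/-- The `h^1` norm of `g` with respect to the bump `φ`. -/
def h1Norm {N : ℕ} (φ : RN N → ℝ) (g : RN N → ℂ) : ℝ≥0∞ :=
  ∫⁻ x, mphi φ g x

/-- An admissible bump for `h^1`: smooth, compactly supported, nonzero integral. -/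
def Admissible {N : ℕ} (φ : RN N → ℝ) : Prop :=
  ContDiff ℝ (⊤ : ℕ∞) φ ∧ HasCompactSupport φ ∧ (∫ x, φ x) ≠ 0

/-- The uncentered Hardy–Littlewood maximal function of a (real-valued) function. -/
def hlMax {N : ℕ} (g : RN N → ℝ) (x : RN N) : ℝ≥0∞ :=
  ⨆ (z : RN N) (r : ℝ) (_ : x ∈ ball z r),
    (volume (ball z r))⁻¹ * ∫⁻ y in ball z r, ENNReal.ofReal ‖g y‖

/-- Coefficients of the normalized vector field `L_j = ∂_j + ∑_k a_{jk} ∂_{n+k}`. -/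
def normCoeff {n m : ℕ} (a : Fin n → Fin m → ℂ) (j : Fin n) : Fin (n + m) → ℂ :=
  Fin.append (Pi.single j 1) (a j)

/-- `g` is the weak (distributional) gradient of `ψ` (complex valued). -/
def WeakGradC {N : ℕ} (ψ : RN N → ℂ) (g : Fin N → RN N → ℂ) : Prop :=
  ∀ i, ∀ u : RN N → ℂ, IsTest u → ∫ x, ψ x * pd i u x = -∫ x, g i x * u x

/-- `g` is the weak (distributional) gradient of `ψ` (real valued). -/
def WeakGradR {N : ℕ} (ψ : RN N → ℝ) (g : Fin N → RN N → ℝ) : Prop :=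
  ∀ i, ∀ u : RN N → ℝ, IsTestR u → ∫ x, ψ x * pdR i u x = -∫ x, g i x * u x

/-- Pointwise Euclidean length of a vector of complex numbers. -/
def vAbs {n N : ℕ} (V : Fin n → RN N → ℂ) (x : RN N) : ℝ :=
  Real.sqrt (∑ j, ‖V j x‖ ^ 2)


/-- Taylor-type lower bound for a convex function. -/
lemma taylor_lower (f f' f'' : ℝ → ℝ) (m : ℝ)
    (h1 : ∀ t ∈ Set.Icc (0:ℝ) 1, HasDerivAt f (f' t) t)
    (h2 : ∀ t ∈ Set.Icc (0:ℝ) 1, HasDerivAt f' (f'' t) t)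
    (h3 : ∀ t ∈ Set.Icc (0:ℝ) 1, 0 ≤ f'' t)
    (h4 : ∀ t ∈ Set.Icc (1/4:ℝ) (1/2), m ≤ f'' t) :
    m / 8 ≤ f 1 - f 0 - f' 0 := by
  have mvt1 : ∀ u v : ℝ, 0 ≤ u → u < v → v ≤ 1 → ∃ c ∈ Set.Ioo u v, f v - f u = f' c * (v - u) := by
    intro u v hu huv hv
    obtain ⟨c, hc, hh⟩ := exists_hasDerivAt_eq_slope f f' huv
      (fun t ht => (h1 t ⟨hu.trans ht.1, ht.2.trans hv⟩).continuousAt.continuousWithinAt)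
      (fun t ht => h1 t ⟨hu.trans ht.1.le, ht.2.le.trans hv⟩)
    refine ⟨c, hc, ?_⟩
    rw [hh]; field_simp [sub_ne_zero.2 huv.ne']
  have mvt2 : ∀ u v : ℝ, 0 ≤ u → u < v → v ≤ 1 → ∃ c ∈ Set.Ioo u v, f' v - f' u = f'' c * (v - u) := by
    intro u v hu huv hv
    obtain ⟨c, hc, hh⟩ := exists_hasDerivAt_eq_slope f' f'' huv
      (fun t ht => (h2 t ⟨hu.trans ht.1, ht.2.trans hv⟩).continuousAt.continuousWithinAt)
      (fun t ht => h2 t ⟨hu.trans ht.1.le, ht.2.le.trans hv⟩)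
    refine ⟨c, hc, ?_⟩
    rw [hh]; field_simp [sub_ne_zero.2 huv.ne']
  have mono : ∀ u v : ℝ, 0 ≤ u → u < v → v ≤ 1 → f' u ≤ f' v := by
    intro u v hu huv hv
    obtain ⟨c, hc, hh⟩ := mvt2 u v hu huv hv
    have := h3 c ⟨hu.trans hc.1.le, hc.2.le.trans hv⟩
    nlinarith [mul_nonneg this (sub_pos.2 huv).le]
  obtain ⟨c, hc, hh⟩ := mvt2 (1/4) (1/2) (by norm_num) (by norm_num) (by norm_num)
  have a1 := h4 c ⟨hc.1.le, hc.2.le⟩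
  have a2 := mono 0 (1/4) (by norm_num) (by norm_num) (by norm_num)
  obtain ⟨d, hd, hhd⟩ := mvt1 0 (1/2) (by norm_num) (by norm_num) (by norm_num)
  obtain ⟨e, he, hhe⟩ := mvt1 (1/2) 1 (by norm_num) (by norm_num) (by norm_num)
  have a3 := mono 0 d (by norm_num) hd.1 (by linarith [hd.2])
  have a4 := mono (1/2) e (by norm_num) he.1 he.2.le
  linarith

/-- Bellman function. -/
def Bel (q r M x y : ℝ) : ℝ := M * y ^ r + x ^ 2 * (x ^ q + y ^ r) ^ (1 - 2 / q)

def Belx (q r x y : ℝ) : ℝ :=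
  2 * x * (x ^ q + y ^ r) ^ (1 - 2 / q) +
    x ^ 2 * ((1 - 2 / q) * ((x ^ q + y ^ r) ^ (1 - 2 / q) / (x ^ q + y ^ r)) * (q * x ^ q / x))

def Bely (q r M x y : ℝ) : ℝ :=
  M * (r * y ^ r / y) +
    x ^ 2 * ((1 - 2 / q) * ((x ^ q + y ^ r) ^ (1 - 2 / q) / (x ^ q + y ^ r)) * (r * y ^ r / y))

lemma key_alg (q r θ al be σ : ℝ) (hq : 2 ≤ q) (hr1 : 1 < r) (hr2 : r ≤ 2)
    (hθ : θ = 1 - 2 / q) (h0 : 0 ≤ σ) (h1 : σ ≤ 1) :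
    - (16 * (1 - σ) * be ^ 2) ≤ al ^ 2 + 4 * θ * al * (q * σ * al + r * (1 - σ) * be)
      - θ * (1 - θ) * (q * σ * al + r * (1 - σ) * be) ^ 2 := by
  have hq0 : 0 < q := by linarith
  have hθ0 : 0 ≤ θ := by rw [hθ, sub_nonneg, div_le_one hq0]; exact hq
  have e : (1 - θ) * q = 2 := by rw [hθ]; field_simp; ring
  have hθ1 : 0 ≤ 1 - θ := by rw [hθ]; have : 0 ≤ 2 / q := by positivity
                             linarith
  set k := r * (1 - σ) * be with hk
  have hk2 : k ^ 2 ≤ 4 * (1 - σ) * be ^ 2 := by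
    have : (r * (1 - σ)) ^ 2 ≤ 4 * (1 - σ) := by
      have h1 : (1 - σ) ^ 2 ≤ 1 - σ := by nlinarith
      have h2 : r ^ 2 ≤ 4 := by nlinarith
      calc (r * (1 - σ)) ^ 2 = r ^ 2 * (1 - σ) ^ 2 := by ring
        _ ≤ 4 * (1 - σ) := by gcongr
    calc k ^ 2 = (r * (1 - σ)) ^ 2 * be ^ 2 := by rw [hk]; ring
      _ ≤ _ := by gcongr
  have s1 : (q * σ * al + k) ^ 2 ≤ 2 * (q * σ * al) ^ 2 + 2 * k ^ 2 := by
    nlinarith [sq_nonneg (q * σ * al - k)]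
  have s2 : θ * (1 - θ) * (q * σ * al + k) ^ 2 ≤
      θ * (1 - θ) * (2 * (q * σ * al) ^ 2 + 2 * k ^ 2) := by gcongr
  have s3 : θ * (1 - θ) * (2 * (q * σ * al) ^ 2) = 4 * θ * q * σ ^ 2 * al ^ 2 := by
    calc _ = 2 * θ * ((1 - θ) * q) * q * σ ^ 2 * al ^ 2 := by ring
      _ = _ := by rw [e]; ring
  have s4 : 4 * θ * q * σ ^ 2 * al ^ 2 ≤ 4 * θ * q * σ * al ^ 2 := by
    have : σ ^ 2 ≤ σ := by nlinarith
    gcongr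
  have s5 : - (4 * θ ^ 2 * k ^ 2) ≤ al ^ 2 + 4 * θ * al * k := by
    nlinarith [sq_nonneg (al + 2 * θ * k)]
  have s6 : 4 * θ ^ 2 * k ^ 2 + θ * (1 - θ) * (2 * k ^ 2) ≤ 4 * k ^ 2 := by
    have : 4 * θ ^ 2 + 2 * (θ * (1 - θ)) ≤ 4 := by nlinarith
    nlinarith [mul_le_mul_of_nonneg_right this (sq_nonneg k)]
  nlinarith

set_option maxHeartbeats 1000000 in
lemma bel_defect (q r M : ℝ) (hq : 2 ≤ q) (hr1 : 1 < r) (hr2 : r ≤ 2)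
    (hM : 17 ≤ M * (r * (r - 1)))
    (x0 y0 x1 y1 m : ℝ) (hx0 : 0 < x0) (hy0 : 0 < y0) (hx1 : 0 < x1) (hy1 : 0 < y1)
    (hm : ∀ t ∈ Set.Icc (1/4:ℝ) (1/2), m ≤
      (x1 - x0) ^ 2 * ((x0 + t * (x1 - x0)) ^ q + (y0 + t * (y1 - y0)) ^ r) ^ (1 - 2 / q)
      + (y0 + t * (y1 - y0)) ^ (r - 2) * (y1 - y0) ^ 2) :
    m / 8 ≤ Bel q r M x1 y1 - Bel q r M x0 y0
      - (Belx q r x0 y0 * (x1 - x0) + Bely q r M x0 y0 * (y1 - y0)) := by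
  set a := x1 - x0 with ha
  set b := y1 - y0 with hb
  set θ := 1 - 2 / q with hθ
  have hq0 : 0 < q := by linarith
  have hθ0 : 0 ≤ θ := by rw [hθ, sub_nonneg, div_le_one hq0]; exact hq
  let xx : ℝ → ℝ := fun t => x0 + t * a
  let yy : ℝ → ℝ := fun t => y0 + t * b
  have pos : ∀ t ∈ Set.Icc (0:ℝ) 1, 0 < xx t ∧ 0 < yy t := by
    intro t ht
    have e1 : xx t = (1 - t) * x0 + t * x1 := by simp only [xx, ha]; ring
    have e2 : yy t = (1 - t) * y0 + t * y1 := by simp only [yy, hb]; ring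
    rw [e1, e2]
    rcases eq_or_lt_of_le ht.1 with h | h
    · rw [← h]; simp [hx0, hy0]
    · have := ht.2
      have h5 : 0 ≤ 1 - t := by linarith
      constructor <;> positivity
  have dx : ∀ t, HasDerivAt xx a t := fun t => by
    exact (((hasDerivAt_id t).mul_const a).const_add x0).congr_deriv (by simp)
  have dy : ∀ t, HasDerivAt yy b t := fun t => by
    exact (((hasDerivAt_id t).mul_const b).const_add y0).congr_deriv (by simp)
  let X : ℝ → ℝ := fun t => (xx t) ^ q
  let Y : ℝ → ℝ := fun t => (yy t) ^ r
  let S : ℝ → ℝ := fun t => X t + Y t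
  let S1 : ℝ → ℝ := fun t => q * X t / xx t * a + r * Y t / yy t * b
  let S2 : ℝ → ℝ := fun t => q * (q - 1) * X t * (a / xx t) ^ 2 + r * (r - 1) * Y t * (b / yy t) ^ 2
  let T : ℝ → ℝ := fun t => (S t) ^ θ
  have Xpos : ∀ t ∈ Set.Icc (0:ℝ) 1, 0 < X t := fun t ht => Real.rpow_pos_of_pos (pos t ht).1 _
  have Ypos : ∀ t ∈ Set.Icc (0:ℝ) 1, 0 < Y t := fun t ht => Real.rpow_pos_of_pos (pos t ht).2 _
  have Spos : ∀ t ∈ Set.Icc (0:ℝ) 1, 0 < S t := fun t ht => add_pos (Xpos t ht) (Ypos t ht)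
  have Tpos : ∀ t ∈ Set.Icc (0:ℝ) 1, 0 < T t := fun t ht => Real.rpow_pos_of_pos (Spos t ht) _
  have dX : ∀ t ∈ Set.Icc (0:ℝ) 1, HasDerivAt X (q * X t / xx t * a) t := by
    intro t ht
    have := (dx t).rpow_const (p := q) (Or.inl (pos t ht).1.ne')
    rw [Real.rpow_sub_one (pos t ht).1.ne'] at this
    convert this using 1
    simp only [X]; ring
  have dY : ∀ t ∈ Set.Icc (0:ℝ) 1, HasDerivAt Y (r * Y t / yy t * b) t := by
    intro t ht
    have := (dy t).rpow_const (p := r) (Or.inl (pos t ht).2.ne')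
    rw [Real.rpow_sub_one (pos t ht).2.ne'] at this
    convert this using 1
    simp only [Y]; ring
  have dS : ∀ t ∈ Set.Icc (0:ℝ) 1, HasDerivAt S (S1 t) t := fun t ht => (dX t ht).add (dY t ht)
  have dS1 : ∀ t ∈ Set.Icc (0:ℝ) 1, HasDerivAt S1 (S2 t) t := by
    intro t ht
    have h1 := ((((dX t ht).const_mul q).div (dx t) (pos t ht).1.ne').mul_const a).add
      ((((dY t ht).const_mul r).div (dy t) (pos t ht).2.ne').mul_const b)
    refine HasDerivAt.congr_deriv (f := _) h1 ?_
    have := (pos t ht).1.ne'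
    have := (pos t ht).2.ne'
    simp only [S2]
    field_simp
  have dT : ∀ t ∈ Set.Icc (0:ℝ) 1, HasDerivAt T (θ * (T t / S t) * S1 t) t := by
    intro t ht
    have := (dS t ht).rpow_const (p := θ) (Or.inl (Spos t ht).ne')
    rw [Real.rpow_sub_one (Spos t ht).ne'] at this
    convert this using 1
    simp only [T]; ring
  let f : ℝ → ℝ := fun t => M * Y t + (xx t) ^ 2 * T t
  let f1 : ℝ → ℝ := fun t => M * (r * Y t / yy t * b) +
    (2 * xx t * a * T t + (xx t) ^ 2 * (θ * (T t / S t) * S1 t))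
  let f2 : ℝ → ℝ := fun t => M * (r * (r - 1) * Y t * (b / yy t) ^ 2) +
    (xx t) ^ 2 * T t * (2 * (a / xx t) ^ 2 + 4 * θ * (a / xx t) * (S1 t / S t)
      - θ * (1 - θ) * (S1 t / S t) ^ 2 + θ * (S2 t / S t))
  have df : ∀ t ∈ Set.Icc (0:ℝ) 1, HasDerivAt f (f1 t) t := by
    intro t ht
    have := ((dY t ht).const_mul M).add (((dx t).pow 2).mul (dT t ht))
    refine HasDerivAt.congr_deriv this ?_
    simp only [f1]
    simp
  have df1 : ∀ t ∈ Set.Icc (0:ℝ) 1, HasDerivAt f1 (f2 t) t := by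
    intro t ht
    have h1 := (((((dY t ht).const_mul r).div (dy t) (pos t ht).2.ne').mul_const b).const_mul M).add
      (((((dx t).const_mul 2).mul_const a).mul (dT t ht)).add
       (((dx t).pow 2).mul ((((dT t ht).div (dS t ht) (Spos t ht).ne').const_mul θ).mul (dS1 t ht))))
    refine HasDerivAt.congr_deriv (f := _) h1 ?_
    have := (pos t ht).1.ne'
    have := (pos t ht).2.ne'
    have := (Spos t ht).ne'
    simp only [f2]
    simp
    field_simp
    ring
  have lower : ∀ t ∈ Set.Icc (0:ℝ) 1, a ^ 2 * T t + (yy t) ^ (r - 2) * b ^ 2 ≤ f2 t := by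
    intro t ht
    obtain ⟨px, py⟩ := pos t ht
    have pX := Xpos t ht
    have pY := Ypos t ht
    have pS := Spos t ht
    have pT := Tpos t ht
    have hσ : 1 - X t / S t = Y t / S t := by
      rw [eq_div_iff pS.ne', sub_mul, div_mul_cancel₀ _ pS.ne']; simp [S]
    have k := key_alg q r θ (a / xx t) (b / yy t) (X t / S t) hq hr1 hr2 hθ (by positivity)
      (by rw [div_le_one pS]; simp [S]; exact pY.le)
    have eS : q * (X t / S t) * (a / xx t) + r * (1 - X t / S t) * (b / yy t) = S1 t / S t := by
      rw [hσ]; simp only [S1]; field_simp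
    rw [eS, hσ] at k
    have hS2 : 0 ≤ θ * (S2 t / S t) := by
      apply mul_nonneg hθ0; apply div_nonneg _ pS.le
      have : 0 ≤ q - 1 := by linarith
      have : 0 ≤ r - 1 := by linarith
      have := pX.le; have := pY.le
      simp only [S2]; positivity
    have xT : (xx t) ^ 2 * T t ≤ S t := by
      have h1 : (xx t) ^ 2 ≤ (S t) ^ (2 / q) := by
        have : (xx t) ^ 2 = (X t) ^ (2 / q) := by
          simp only [X]; rw [← Real.rpow_mul px.le, mul_div_cancel₀ _ hq0.ne']; norm_cast
        rw [this]
        apply Real.rpow_le_rpow pX.le _ (by positivity)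
        simp [S]; exact pY.le
      calc _ ≤ (S t) ^ (2 / q) * (S t) ^ θ := by
              apply mul_le_mul_of_nonneg_right h1 pT.le
        _ = S t := by rw [← Real.rpow_add pS, hθ]; simp
    have yr : (yy t) ^ (r - 2) * b ^ 2 = Y t * (b / yy t) ^ 2 := by
      rw [Real.rpow_sub py]; simp only [Y]; norm_cast; field_simp
    have ax : a ^ 2 * T t = (xx t) ^ 2 * T t * (a / xx t) ^ 2 := by field_simp
    rw [yr, ax]
    simp only [f2]
    have k2 : (xx t) ^ 2 * T t * (- (16 * (Y t / S t) * (b / yy t) ^ 2)) ≤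
       (xx t) ^ 2 * T t * ((a / xx t) ^ 2 + 4 * θ * (a / xx t) * (S1 t / S t)
      - θ * (1 - θ) * (S1 t / S t) ^ 2) := mul_le_mul_of_nonneg_left k (by positivity)
    have k3 : (xx t) ^ 2 * T t * (16 * (Y t / S t) * (b / yy t) ^ 2) ≤ 16 * Y t * (b / yy t) ^ 2 := by
      calc _ ≤ S t * (16 * (Y t / S t) * (b / yy t) ^ 2) := by gcongr
        _ = _ := by field_simp
    have k4 : 17 * (Y t * (b / yy t) ^ 2) ≤ M * (r * (r - 1)) * (Y t * (b / yy t) ^ 2) := by gcongr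
    have k5 : 0 ≤ (xx t) ^ 2 * T t * (θ * (S2 t / S t)) := by positivity
    have k6 : (xx t) ^ 2 * T t * (2 * (a / xx t) ^ 2 + 4 * θ * (a / xx t) * (S1 t / S t)
      - θ * (1 - θ) * (S1 t / S t) ^ 2 + θ * (S2 t / S t)) =
      (xx t) ^ 2 * T t * (a / xx t) ^ 2 + (xx t) ^ 2 * T t * ((a / xx t) ^ 2 + 4 * θ * (a / xx t) * (S1 t / S t)
      - θ * (1 - θ) * (S1 t / S t) ^ 2) + (xx t) ^ 2 * T t * (θ * (S2 t / S t)) := by ring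
    have k7 : M * (r * (r - 1) * Y t * (b / yy t) ^ 2) = M * (r * (r - 1)) * (Y t * (b / yy t) ^ 2) := by ring
    rw [mul_neg] at k2
    have k8 : 16 * Y t * (b / yy t) ^ 2 = 16 * (Y t * (b / yy t) ^ 2) := by ring
    rw [k6, k7]
    linarith
  have := taylor_lower f f1 f2 m df df1
    (fun t ht => le_trans (by
      have := (Tpos t ht).le
      have : 0 ≤ (yy t) ^ (r - 2) := Real.rpow_nonneg (pos t ht).2.le _
      positivity) (lower t ht))
    (fun t ht => (hm t ht).trans (lower t ⟨by linarith [ht.1], by linarith [ht.2]⟩))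
  convert this using 1
  have ex : x0 + a = x1 := by simp [ha]
  have ey : y0 + b = y1 := by simp [hb]
  simp only [f, f1, Bel, Belx, Bely, S1, T, S, X, Y, xx, yy, one_mul, zero_mul, add_zero, ex, ey]
  ring

/-- Defect of the Bellman function. -/
def BelE (q r M x0 y0 x1 y1 : ℝ) : ℝ := Bel q r M x1 y1 - Bel q r M x0 y0
      - (Belx q r x0 y0 * (x1 - x0) + Bely q r M x0 y0 * (y1 - y0))

lemma belE_lower (q r M : ℝ) (hqr : q.HolderConjugate r) (hq : 2 ≤ q)
    (hM : 17 ≤ M * (r * (r - 1)))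
    (x0 y0 x1 y1 : ℝ) (hx0 : 0 < x0) (hy0 : 0 < y0) (hx1 : 0 < x1) (hy1 : 0 < y1) :
    (x1 - x0) ^ 2 * (y0 / 2) ^ (2 - r) / 8 ≤ BelE q r M x0 y0 x1 y1 ∧
    (x1 - x0) ^ 2 * (|x1 - x0| / 4) ^ (q - 2) / 8 ≤ BelE q r M x0 y0 x1 y1 ∧
    (max y0 y1) ^ (r - 2) * (y1 - y0) ^ 2 / 8 ≤ BelE q r M x0 y0 x1 y1 := by
  have hr1 : 1 < r := hqr.symm.lt
  have hqr' : q * r = q + r := hqr.mul_eq_add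
  have hr2 : r ≤ 2 := by nlinarith
  have hq0 : 0 < q := by linarith
  have hθ0 : 0 ≤ 1 - 2 / q := by rw [sub_nonneg, div_le_one hq0]; exact hq
  have e1 : r * (1 - 2 / q) = 2 - r := by field_simp; linarith
  have e2 : q * (1 - 2 / q) = q - 2 := by field_simp
  have main := fun m => bel_defect q r M hq hr1 hr2 hM x0 y0 x1 y1 m hx0 hy0 hx1 hy1
  have hx : ∀ t ∈ Set.Icc (1/4:ℝ) (1/2), |x1 - x0| / 4 ≤ x0 + t * (x1 - x0) ∧ 0 < x0 + t * (x1 - x0) := by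
    intro t ht
    obtain ⟨h1, h2⟩ := ht
    rcases abs_cases (x1 - x0) with ⟨h, h'⟩ | ⟨h, h'⟩ <;> rw [h] <;> constructor <;> nlinarith
  have hy : ∀ t ∈ Set.Icc (1/4:ℝ) (1/2), y0 / 2 ≤ y0 + t * (y1 - y0) ∧ 
      y0 + t * (y1 - y0) ≤ max y0 y1 := by
    intro t ht
    obtain ⟨h1, h2⟩ := ht
    constructor
    · nlinarith
    · rcases le_total y0 y1 with h | h
      · rw [max_eq_right h]; nlinarith
      · rw [max_eq_left h]; nlinarith
  refine ⟨main _ ?_, main _ ?_, main _ ?_⟩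
  · intro t ht
    have hyp : 0 < y0 + t * (y1 - y0) := by have := (hy t ht).1; linarith
    have : 0 ≤ (y0 + t * (y1 - y0)) ^ (r - 2) * (y1 - y0) ^ 2 := by positivity
    have h2 : (y0 / 2) ^ (2 - r) ≤
        ((x0 + t * (x1 - x0)) ^ q + (y0 + t * (y1 - y0)) ^ r) ^ (1 - 2 / q) := by
      have hxp := (hx t ht).2
      calc (y0 / 2) ^ (2 - r) ≤ (y0 + t * (y1 - y0)) ^ (2 - r) :=
            Real.rpow_le_rpow (by positivity) (hy t ht).1 (by linarith)
        _ = ((y0 + t * (y1 - y0)) ^ r) ^ (1 - 2 / q) := by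
            rw [← Real.rpow_mul hyp.le, e1]
        _ ≤ _ := Real.rpow_le_rpow (by positivity) (by
            have : 0 < (x0 + t * (x1 - x0)) ^ q := by positivity
            linarith) hθ0
    nlinarith [mul_le_mul_of_nonneg_left h2 (sq_nonneg (x1 - x0))]
  · intro t ht
    have hyp : 0 < y0 + t * (y1 - y0) := by have := (hy t ht).1; linarith
    have : 0 ≤ (y0 + t * (y1 - y0)) ^ (r - 2) * (y1 - y0) ^ 2 := by positivity
    have h2 : (|x1 - x0| / 4) ^ (q - 2) ≤
        ((x0 + t * (x1 - x0)) ^ q + (y0 + t * (y1 - y0)) ^ r) ^ (1 - 2 / q) := by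
      have hxp := (hx t ht).2
      calc (|x1 - x0| / 4) ^ (q - 2) ≤ (x0 + t * (x1 - x0)) ^ (q - 2) :=
            Real.rpow_le_rpow (by positivity) (hx t ht).1 (by linarith)
        _ = ((x0 + t * (x1 - x0)) ^ q) ^ (1 - 2 / q) := by
            rw [← Real.rpow_mul hxp.le, e2]
        _ ≤ _ := Real.rpow_le_rpow (by positivity) (by
            have : 0 < (y0 + t * (y1 - y0)) ^ r := by positivity
            linarith) hθ0
    nlinarith [mul_le_mul_of_nonneg_left h2 (sq_nonneg (x1 - x0))]
  · intro t ht
    have hyp : 0 < y0 + t * (y1 - y0) := by have := (hy t ht).1; linarith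
    have hxp := (hx t ht).2
    have : 0 ≤ (x1 - x0) ^ 2 * ((x0 + t * (x1 - x0)) ^ q + (y0 + t * (y1 - y0)) ^ r) ^ (1 - 2 / q) := by
      positivity
    have h2 : (max y0 y1) ^ (r - 2) ≤ (y0 + t * (y1 - y0)) ^ (r - 2) :=
      Real.rpow_le_rpow_of_nonpos hyp (hy t ht).2 (by linarith)
    nlinarith [mul_le_mul_of_nonneg_right h2 (sq_nonneg (y1 - y0))]

lemma belE_nonneg (q r M : ℝ) (hqr : q.HolderConjugate r) (hq : 2 ≤ q)
    (hM : 17 ≤ M * (r * (r - 1)))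
    (x0 y0 x1 y1 : ℝ) (hx0 : 0 < x0) (hy0 : 0 < y0) (hx1 : 0 < x1) (hy1 : 0 < y1) :
    0 ≤ BelE q r M x0 y0 x1 y1 :=
  le_trans (by positivity) (belE_lower q r M hqr hq hM x0 y0 x1 y1 hx0 hy0 hx1 hy1).1

lemma belE_pair (q r M : ℝ) (hqr : q.HolderConjugate r) (hq : 2 ≤ q)
    (hM : 17 ≤ M * (r * (r - 1)))
    (x0 y0 x1 y1 x2 y2 : ℝ) (hx0 : 0 < x0) (hy0 : 0 < y0) (hx1 : 0 < x1) (hy1 : 0 < y1)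
    (hx2 : 0 < x2) (hy2 : 0 < y2) :
    |x1 - x0| * |y2 - y0| ≤ (16 * 4 ^ q) *
      (BelE q r M x0 y0 x1 y1 + BelE q r M x0 y0 x2 y2) := by
  have hr1 : 1 < r := hqr.symm.lt
  have hqr' : q * r = q + r := hqr.mul_eq_add
  have hr2 : r ≤ 2 := by nlinarith
  have hq0 : 0 < q := by linarith
  obtain ⟨h1, h2, -⟩ := belE_lower q r M hqr hq hM x0 y0 x1 y1 hx0 hy0 hx1 hy1
  obtain ⟨-, -, h3⟩ := belE_lower q r M hqr hq hM x0 y0 x2 y2 hx0 hy0 hx2 hy2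
  have n1 := belE_nonneg q r M hqr hq hM x0 y0 x1 y1 hx0 hy0 hx1 hy1
  have n2 := belE_nonneg q r M hqr hq hM x0 y0 x2 y2 hx0 hy0 hx2 hy2
  set E1 := BelE q r M x0 y0 x1 y1
  set E2 := BelE q r M x0 y0 x2 y2
  have h4q : (1:ℝ) ≤ 4 ^ q := Real.one_le_rpow (by norm_num) hq0.le
  have ha2 : (x1 - x0) ^ 2 = |x1 - x0| ^ 2 := (sq_abs _).symm
  have hb2 : (y2 - y0) ^ 2 = |y2 - y0| ^ 2 := (sq_abs _).symm
  rw [ha2] at h1 h2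
  rw [hb2] at h3
  set A := |x1 - x0| with hA
  set D := |y2 - y0| with hD
  have hA0 : 0 ≤ A := abs_nonneg _
  have hD0 : 0 ≤ D := abs_nonneg _
  rcases le_or_gt y2 (2 * y0) with h | h
  · have m1 : (2 * y0) ^ (r - 2) ≤ (max y0 y2) ^ (r - 2) :=
      Real.rpow_le_rpow_of_nonpos (by positivity) (max_le (by linarith) h) (by linarith)
    set U := (y0 / 2) ^ (2 - r) with hU
    set Z := (2 * y0) ^ (r - 2) with hZ
    have hU0 : 0 < U := by positivity
    have hZ0 : 0 < Z := by positivity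
    have hUZ : 1 / 4 ≤ U * Z := by
      have : Z = (1/4) ^ (2 - r) * ((y0 / 2) ^ (2 - r))⁻¹ := by
        rw [hZ, show r - 2 = -(2 - r) by ring, Real.rpow_neg (by positivity),
          ← Real.inv_rpow (by positivity), ← Real.inv_rpow (by positivity),
          ← Real.mul_rpow (by positivity) (by positivity)]
        congr 1
        field_simp; norm_num
      rw [this, ← hU]
      have : U * ((1/4:ℝ) ^ (2 - r) * U⁻¹) = (1/4) ^ (2 - r) := by field_simp
      rw [this]
      calc (1/4:ℝ) = (1/4) ^ (1:ℝ) := by simp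
        _ ≤ _ := Real.rpow_le_rpow_of_exponent_ge (by norm_num) (by norm_num) (by linarith)
    have h3' : Z * D ^ 2 / 8 ≤ E2 := le_trans (by gcongr) h3
    have k : A * D ≤ A ^ 2 * U + Z * D ^ 2 := by
      have k1 : (A * D) ^ 2 ≤ (A ^ 2 * U + Z * D ^ 2) ^ 2 := by
        have : 0 ≤ A ^ 2 * D ^ 2 * (U * Z - 1 / 4) := mul_nonneg (by positivity) (by linarith)
        nlinarith [sq_nonneg (A ^ 2 * U - Z * D ^ 2)]
      exact (pow_le_pow_iff_left₀ (by positivity) (by positivity) two_ne_zero).1 k1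
    have : 16 * (E1 + E2) ≤ 16 * 4 ^ q * (E1 + E2) := by
      apply mul_le_mul_of_nonneg_right _ (by linarith); linarith
    linarith
  · have hy : max y0 y2 = y2 := max_eq_right (by linarith)
    have hDe : D = y2 - y0 := abs_of_pos (by linarith)
    have hDp : 0 < D := by linarith
    have hy2 : y2 ≤ 2 * D := by linarith
    have m1 : (2 * D) ^ (r - 2) ≤ y2 ^ (r - 2) :=
      Real.rpow_le_rpow_of_nonpos (by positivity) hy2 (by linarith)
    rw [hy] at h3
    have m2 : D ^ r / 2 ≤ (2 * D) ^ (r - 2) * D ^ 2 := by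
      rw [Real.mul_rpow (by norm_num) hD0, mul_assoc, ← Real.rpow_natCast D 2, ← Real.rpow_add hDp]
      have : (1/2:ℝ) ≤ 2 ^ (r - 2) := by
        calc (1/2:ℝ) = 2 ^ (-1:ℝ) := by rw [Real.rpow_neg_one]; norm_num
          _ ≤ _ := Real.rpow_le_rpow_of_exponent_le (by norm_num) (by linarith)
      have h0 : 0 ≤ D ^ r := by positivity
      have : r - 2 + ((2:ℕ):ℝ) = r := by push_cast; ring
      rw [this]
      nlinarith
    have m3 : D ^ r ≤ 16 * E2 := by
      have : (2 * D) ^ (r - 2) * D ^ 2 ≤ y2 ^ (r - 2) * D ^ 2 := by gcongr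
      linarith
    have m4 : A ^ q ≤ 4 ^ q * 8 * E1 := by
      rcases eq_or_lt_of_le hA0 with h | hAp
      · rw [← h, Real.zero_rpow hq0.ne']; positivity
      have : A ^ q = 4 ^ (q - 2) * (A ^ 2 * (A / 4) ^ (q - 2)) := by
        rw [Real.div_rpow hA0 (by norm_num), Real.rpow_sub hAp]
        have : (0:ℝ) < 4 ^ (q - 2) := by positivity
        norm_cast
        field_simp
      rw [this]
      have h5 : (4:ℝ) ^ (q - 2) ≤ 4 ^ q := Real.rpow_le_rpow_of_exponent_le (by norm_num) (by linarith)
      calc _ ≤ 4 ^ q * (8 * E1) := mul_le_mul h5 (by linarith) (by positivity) (by positivity)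
        _ = _ := by ring
    have Y := Real.young_inequality_of_nonneg hA0 hD0 hqr
    have y1 : A ^ q / q ≤ A ^ q := div_le_self (by positivity) (by linarith)
    have y2 : D ^ r / r ≤ D ^ r := div_le_self (by positivity) (by linarith)
    have : 16 * E2 ≤ 16 * 4 ^ q * E2 := by nlinarith
    have : 4 ^ q * 8 * E1 ≤ 16 * 4 ^ q * E1 := by
      have : 0 ≤ 4 ^ q * E1 := by positivity
      linarith
    linarith

lemma bel_jensen_pos (q r M : ℝ) (hqr : q.HolderConjugate r) (hq : 2 ≤ q)
    (hM : 17 ≤ M * (r * (r - 1))) (x y : Fin 5 → ℝ) (hx : ∀ i, 0 < x i) (hy : ∀ i, 0 < y i)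
    (i j : Fin 5) :
    |x i - x 0| * |y j - y 0| ≤ (640 * 4 ^ q) *
      ((1 / 5) * ∑ k, Bel q r M (x k) (y k) - Bel q r M ((1 / 5) * ∑ k, x k) ((1 / 5) * ∑ k, y k)) := by
  set X := (1 / 5) * ∑ k, x k with hX
  set Y := (1 / 5) * ∑ k, y k with hY
  have hX0 : 0 < X := mul_pos (by norm_num) (Finset.sum_pos (fun i _ => hx i) ⟨0, by simp⟩)
  have hY0 : 0 < Y := mul_pos (by norm_num) (Finset.sum_pos (fun i _ => hy i) ⟨0, by simp⟩)
  set E : Fin 5 → ℝ := fun k => BelE q r M X Y (x k) (y k) with hE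
  have hE0 : ∀ k, 0 ≤ E k := fun k => belE_nonneg q r M hqr hq hM X Y _ _ hX0 hY0 (hx k) (hy k)
  have sum : (1 / 5) * ∑ k, Bel q r M (x k) (y k) - Bel q r M X Y = (1 / 5) * ∑ k, E k := by
    simp only [hE, BelE, Finset.sum_sub_distrib, Finset.sum_add_distrib, ← Finset.mul_sum]
    have e1 : ∑ k, x k = 5 * X := by rw [hX]; ring
    have e2 : ∑ k, y k = 5 * Y := by rw [hY]; ring
    rw [e1, e2]
    simp
    ring
  rw [sum]
  have P : ∀ i j, |x i - X| * |y j - Y| ≤ 16 * 4 ^ q * (2 * ∑ k, E k) := by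
    intro i j
    refine (belE_pair q r M hqr hq hM X Y _ _ _ _ hX0 hY0 (hx i) (hy i) (hx j) (hy j)).trans ?_
    have h1 : E i ≤ ∑ k, E k := Finset.single_le_sum (fun k _ => hE0 k) (Finset.mem_univ i)
    have h2 : E j ≤ ∑ k, E k := Finset.single_le_sum (fun k _ => hE0 k) (Finset.mem_univ j)
    gcongr
    simp only [hE] at h1 h2 ⊢
    linarith
  have t1 : |x i - x 0| ≤ |x i - X| + |x 0 - X| := by
    rw [abs_sub_comm (x 0)]; exact abs_sub_le _ _ _
  have t2 : |y j - y 0| ≤ |y j - Y| + |y 0 - Y| := by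
    rw [abs_sub_comm (y 0)]; exact abs_sub_le _ _ _
  calc _ ≤ (|x i - X| + |x 0 - X|) * (|y j - Y| + |y 0 - Y|) := by gcongr
    _ ≤ _ := by
      have := P i j; have := P i 0; have := P 0 j; have := P 0 0
      nlinarith

lemma bel_continuous (q r M : ℝ) (hqr : q.HolderConjugate r) (hq : 2 ≤ q) :
    Continuous (fun z : ℝ × ℝ => Bel q r M z.1 z.2) := by
  have hq0 : 0 < q := by linarith
  have hr0 : 0 < r := hqr.symm.pos
  have hθ0 : 0 ≤ 1 - 2 / q := by rw [sub_nonneg, div_le_one hq0]; exact hq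
  unfold Bel
  have c1 : Continuous fun z : ℝ × ℝ => z.1 ^ q := continuous_fst.rpow_const (fun _ => Or.inr hq0.le)
  have c2 : Continuous fun z : ℝ × ℝ => z.2 ^ r := continuous_snd.rpow_const (fun _ => Or.inr hr0.le)
  exact (c2.const_mul M).add ((continuous_fst.pow 2).mul ((c1.add c2).rpow_const (fun _ => Or.inr hθ0)))

lemma bel_jensen (q r M : ℝ) (hqr : q.HolderConjugate r) (hq : 2 ≤ q)
    (hM : 17 ≤ M * (r * (r - 1))) (x y : Fin 5 → ℝ) (hx : ∀ i, 0 ≤ x i) (hy : ∀ i, 0 ≤ y i)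
    (i j : Fin 5) :
    |x i - x 0| * |y j - y 0| ≤ (640 * 4 ^ q) *
      ((1 / 5) * ∑ k, Bel q r M (x k) (y k) - Bel q r M ((1 / 5) * ∑ k, x k) ((1 / 5) * ∑ k, y k)) := by
  have hB := bel_continuous q r M hqr hq
  have key : ∀ ε : ℝ, ε ∈ Set.Ioi (0:ℝ) → |x i - x 0| * |y j - y 0| ≤ (640 * 4 ^ q) *
      ((1 / 5) * ∑ k, Bel q r M (x k + ε) (y k + ε) -
        Bel q r M ((1 / 5) * ∑ k, (x k + ε)) ((1 / 5) * ∑ k, (y k + ε))) := by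
    intro ε hε
    have := bel_jensen_pos q r M hqr hq hM (fun k => x k + ε) (fun k => y k + ε)
      (fun k => add_pos_of_nonneg_of_pos (hx k) hε) (fun k => add_pos_of_nonneg_of_pos (hy k) hε) i j
    simpa using this
  have cont : Continuous fun ε : ℝ => (640 * 4 ^ q) *
      ((1 / 5) * ∑ k, Bel q r M (x k + ε) (y k + ε) -
        Bel q r M ((1 / 5) * ∑ k, (x k + ε)) ((1 / 5) * ∑ k, (y k + ε))) := by
    refine continuous_const.mul ((continuous_const.mul (continuous_finsetSum _ fun k _ => ?_)).sub ?_)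
    · exact hB.comp (f := fun ε : ℝ => (x k + ε, y k + ε)) (by fun_prop)
    · exact hB.comp (f := fun ε : ℝ => ((1 / 5) * ∑ k, (x k + ε), (1 / 5) * ∑ k, (y k + ε))) (by fun_prop)
  have lim := (cont.tendsto 0).mono_left (nhdsWithin_le_nhds (s := Set.Ioi (0:ℝ)))
  have := ge_of_tendsto lim (Filter.eventually_of_mem self_mem_nhdsWithin key)
  simpa using this

lemma bel_nonneg (q r M : ℝ) (hM : 0 ≤ M) (x y : ℝ) (hx : 0 ≤ x) (hy : 0 ≤ y) :
    0 ≤ Bel q r M x y := by unfold Bel; positivity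

lemma bel_upper (q r M : ℝ) (hq : 2 ≤ q) (hM : 0 ≤ M)
    (x y : ℝ) (hx : 0 ≤ x) (hy : 0 ≤ y) :
    Bel q r M x y ≤ (M + 1) * (x ^ q + y ^ r) := by
  have hq0 : 0 < q := by linarith
  have h1 : 0 ≤ x ^ q := by positivity
  have h2 : 0 ≤ y ^ r := by positivity
  have : x ^ 2 * (x ^ q + y ^ r) ^ (1 - 2 / q) ≤ x ^ q + y ^ r := by
    rcases eq_or_lt_of_le hx with h | hx
    · rw [← h]; simp; positivity
    have hS : 0 < x ^ q + y ^ r := by positivity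
    have e : x ^ 2 = (x ^ q) ^ (2 / q) := by
      rw [← Real.rpow_mul hx.le, mul_div_cancel₀ _ hq0.ne']; norm_cast
    calc _ ≤ (x ^ q + y ^ r) ^ (2 / q) * (x ^ q + y ^ r) ^ (1 - 2 / q) := by
          rw [e]; gcongr; linarith
      _ = _ := by rw [← Real.rpow_add hS]; simp
  unfold Bel
  nlinarith [mul_nonneg hM h1]

/-- The Bellman function packaged. -/
lemma exists_bellman (q r : ℝ) (hqr : q.HolderConjugate r) :
    ∃ (B : ℝ → ℝ → ℝ) (C : ℝ), 0 ≤ C ∧ Continuous (fun z : ℝ × ℝ => B z.1 z.2) ∧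
      (∀ x y, 0 ≤ x → 0 ≤ y → 0 ≤ B x y) ∧
      (∀ x y, 0 ≤ x → 0 ≤ y → B x y ≤ C * (x ^ q + y ^ r)) ∧
      (∀ x y : Fin 5 → ℝ, (∀ i, 0 ≤ x i) → (∀ i, 0 ≤ y i) → ∀ i j,
        |x i - x 0| * |y j - y 0| ≤ 
          ((1 / 5) * ∑ k, B (x k) (y k) - B ((1 / 5) * ∑ k, x k) ((1 / 5) * ∑ k, y k))) := by
  wlog hq : 2 ≤ q generalizing q r
  · have hr : 2 ≤ r := by
      have h1 := hqr.mul_eq_add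
      have h2 := hqr.lt
      have h3 := hqr.symm.lt
      push Not at hq
      nlinarith
    obtain ⟨B, C, h0, h1, h2, h3, h4⟩ := this r q hqr.symm hr
    refine ⟨fun x y => B y x, C, h0, ?_, fun x y hx hy => h2 y x hy hx, ?_, ?_⟩
    · exact h1.comp continuous_swap
    · intro x y hx hy; rw [add_comm]; exact h3 y x hy hx
    · intro x y hx hy i j
      rw [mul_comm]; exact h4 y x hy hx j i
  have hr1 := hqr.symm.lt
  have hr0 : 0 < r * (r - 1) := mul_pos (by linarith) (by linarith)
  set M := 17 / (r * (r - 1)) with hM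
  have hM0 : 0 ≤ M := by positivity
  have hM1 : 17 ≤ M * (r * (r - 1)) := by rw [hM, div_mul_cancel₀ _ hr0.ne']
  refine ⟨fun x y => (640 * 4 ^ q) * Bel q r M x y, (640 * 4 ^ q) * (M + 1), by positivity,
    (bel_continuous q r M hqr hq).const_mul _, ?_, ?_, ?_⟩
  · intro x y hx hy; exact mul_nonneg (by positivity) (bel_nonneg q r M hM0 x y hx hy)
  · intro x y hx hy
    rw [mul_assoc]
    exact mul_le_mul_of_nonneg_left (bel_upper q r M hq hM0 x y hx hy) (by positivity)
  · intro x y hx hy i j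
    refine (bel_jensen q r M hqr hq hM1 x y hx hy i j).trans (le_of_eq ?_)
    rw [← Finset.mul_sum]; ring

section averaging

variable {E : Type*} [NormedAddCommGroup E] [NormedSpace ℝ E] [FiniteDimensional ℝ E]
  [MeasurableSpace E] [BorelSpace E]

/-- Five-point average. -/
def Av {E F : Type*} [AddCommGroup E] [AddCommGroup F] [Module ℝ F] (s : Fin 5 → E) (f : E → F) (x : E) : F :=
  (1 / 5 : ℝ) • ∑ i, f (x + s i)

/-- Continuous with compact support. -/
def CC {E F : Type*} [TopologicalSpace E] [TopologicalSpace F] [Zero F] (f : E → F) : Prop :=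
  Continuous f ∧ HasCompactSupport f

lemma CC.trans {F : Type*} [TopologicalSpace F] [Zero F] {f : E → F} (h : CC f) (v : E) :
    CC (fun x => f (x + v)) :=
  ⟨h.1.comp (continuous_add_const v), h.2.comp_homeomorph (Homeomorph.addRight v)⟩

lemma CC.comp0 {E F G : Type*} [TopologicalSpace E] [TopologicalSpace F] [Zero F]
    [TopologicalSpace G] [Zero G] {f : E → F} (h : CC f) (g : F → G) (hg : Continuous g)
    (h0 : g 0 = 0) : CC (fun x => g (f x)) :=
  ⟨hg.comp h.1, h.2.comp_left h0⟩

lemma CC.comp2 {E F F' G : Type*} [TopologicalSpace E] [TopologicalSpace F] [Zero F]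
    [TopologicalSpace F'] [Zero F']
    [TopologicalSpace G] [Zero G] {f : E → F} {f' : E → F'} (h : CC f) (h' : CC f') (g : F → F' → G)
    (hg : Continuous (fun z : F × F' => g z.1 z.2))
    (h0 : g 0 0 = 0) : CC (fun x => g (f x) (f' x)) :=
  ⟨hg.comp (h.1.prodMk h'.1), h.2.comp₂_left h'.2 h0⟩

lemma CC.add {E F : Type*} [TopologicalSpace E] [NormedAddCommGroup F] {f g : E → F}
    (hf : CC f) (hg : CC g) : CC (fun x => f x + g x) :=
  hf.comp2 hg (fun a b => a + b) (by fun_prop) (by simp)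

lemma CC.sub {E F : Type*} [TopologicalSpace E] [NormedAddCommGroup F] {f g : E → F}
    (hf : CC f) (hg : CC g) : CC (fun x => f x - g x) :=
  hf.comp2 hg (fun a b => a - b) (by fun_prop) (by simp)

lemma CC.mul {E F : Type*} [TopologicalSpace E] [NormedRing F] {f g : E → F}
    (hf : CC f) (hg : CC g) : CC (fun x => f x * g x) :=
  hf.comp2 hg (fun a b => a * b) (by fun_prop) (by simp)

lemma CC.norm {E F : Type*} [TopologicalSpace E] [NormedAddCommGroup F] {f : E → F}
    (hf : CC f) : CC (fun x => ‖f x‖) :=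
  hf.comp0 (fun a => ‖a‖) (by fun_prop) (by simp)

lemma CC.const_mul {E F : Type*} [TopologicalSpace E] [NormedRing F] {f : E → F}
    (hf : CC f) (c : F) : CC (fun x => c * f x) :=
  hf.comp0 (fun a => c * a) (by fun_prop) (by simp)

lemma CC.rpow {E : Type*} [TopologicalSpace E] {f : E → ℝ}
    (hf : CC f) {q : ℝ} (hq : 0 < q) : CC (fun x => f x ^ q) :=
  hf.comp0 (fun a => a ^ q) (Real.continuous_rpow_const hq.le) (by simp [hq.ne'])

lemma CC.sum {E F ι : Type*} [TopologicalSpace E] [NormedAddCommGroup F] (t : Finset ι) {f : ι → E → F}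
    (hf : ∀ i, CC (f i)) : CC (fun x => ∑ i ∈ t, f i x) := by
  classical
  induction t using Finset.induction_on with
  | empty => simpa using ⟨continuous_const, HasCompactSupport.zero⟩
  | insert a t ha ih => simp only [Finset.sum_insert ha]; exact (hf a).add ih

lemma CC.av {F : Type*} [NormedAddCommGroup F] [NormedSpace ℝ F] {f : E → F} (h : CC f)
    (s : Fin 5 → E) : CC (Av s f) :=
  (CC.sum Finset.univ (fun i => h.trans (s i))).comp0 (fun a => (1 / 5 : ℝ) • a) (by fun_prop) (by simp)

lemma CC.avi {F : Type*} [NormedAddCommGroup F] [NormedSpace ℝ F] {f : E → F} (h : CC f)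
    (s : Fin 5 → E) (j : ℕ) : CC ((Av s)^[j] f) := by
  induction j with
  | zero => exact h
  | succ j ih => rw [Function.iterate_succ_apply']; exact ih.av s

variable (μ : Measure E) [μ.IsAddHaarMeasure]

lemma CC.int {F : Type*} [NormedAddCommGroup F] {f : E → F} (h : CC f) : Integrable f μ :=
  h.1.integrable_of_hasCompactSupport h.2

lemma avi_nonneg (s : Fin 5 → E) (F : E → ℝ) (hF : ∀ x, 0 ≤ F x) (j : ℕ) (x : E) :
    0 ≤ (Av s)^[j] F x := by
  induction j generalizing x with
  | zero => exact hF x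
  | succ j ih =>
    rw [Function.iterate_succ_apply']
    exact smul_nonneg (by norm_num) (Finset.sum_nonneg fun i _ => ih _)

lemma embed_pos (q r : ℝ) (hqr : q.HolderConjugate r) :
    ∃ C : ℝ, 0 ≤ C ∧ ∀ (s : Fin 5 → E), s 0 = 0 → ∀ F G : E → ℝ, CC F → CC G →
      (∀ x, 0 ≤ F x) → (∀ x, 0 ≤ G x) → ∀ (i k : Fin 5) (K : ℕ),
      ∑ j ∈ Finset.range K, ∫ x, |(Av s)^[j] F (x + s i) - (Av s)^[j] F x| *
        |(Av s)^[j] G (x + s k) - (Av s)^[j] G x| ∂μ ≤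
      C * (∫ x, F x ^ q ∂μ + ∫ x, G x ^ r ∂μ) := by
  obtain ⟨B, C, hC, h1, h2, h3, h4⟩ := exists_bellman q r hqr
  have hq0 : 0 < q := hqr.pos
  have hr0 : 0 < r := hqr.symm.pos
  refine ⟨C, hC, ?_⟩
  intro s hs F G hF hG hF0 hG0 i k K
  have B0 : B 0 0 = 0 := by
    apply le_antisymm _ (h2 0 0 le_rfl le_rfl)
    have := h3 0 0 le_rfl le_rfl
    simpa [Real.zero_rpow hq0.ne', Real.zero_rpow hr0.ne'] using this
  have step : ∀ F G : E → ℝ, CC F → CC G → (∀ x, 0 ≤ F x) → (∀ x, 0 ≤ G x) →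
      ∫ x, |F (x + s i) - F x| * |G (x + s k) - G x| ∂μ ≤
        ∫ x, B (F x) (G x) ∂μ - ∫ x, B (Av s F x) (Av s G x) ∂μ := by
    intro F G hF hG hF0 hG0
    have cB : CC (fun x => B (F x) (G x)) := hF.comp2 hG B h1 B0
    have cBA : CC (fun x => B (Av s F x) (Av s G x)) := (hF.av s).comp2 (hG.av s) B h1 B0
    have e : ∫ x, B (F x) (G x) ∂μ = ∫ x, (1 / 5) * ∑ l, B (F (x + s l)) (G (x + s l)) ∂μ := by
      rw [integral_const_mul, integral_finsetSum _ (fun l _ => (cB.trans (s l)).int μ)]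
      have : ∀ l, ∫ x, B (F (x + s l)) (G (x + s l)) ∂μ = ∫ x, B (F x) (G x) ∂μ := fun l =>
        integral_add_right_eq_self (fun x => B (F x) (G x)) (s l)
      simp [this]
    have cs : CC (fun x => (1 / 5) * ∑ l, B (F (x + s l)) (G (x + s l))) :=
      (CC.sum Finset.univ (fun l => cB.trans (s l))).const_mul _
    rw [e, ← integral_sub (cs.int μ) (cBA.int μ)]
    apply integral_mono
    · exact CC.int μ ((((hF.trans (s i)).sub hF).norm).mul (((hG.trans (s k)).sub hG).norm))
    · exact (cs.sub cBA).int μ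
    · intro x
      have := h4 (fun l => F (x + s l)) (fun l => G (x + s l)) (fun l => hF0 _) (fun l => hG0 _) i k
      simpa [hs, Av] using this
  have ind : ∀ K : ℕ, ∑ j ∈ Finset.range K, ∫ x, |(Av s)^[j] F (x + s i) - (Av s)^[j] F x| *
        |(Av s)^[j] G (x + s k) - (Av s)^[j] G x| ∂μ +
        ∫ x, B ((Av s)^[K] F x) ((Av s)^[K] G x) ∂μ ≤ ∫ x, B (F x) (G x) ∂μ := by
    intro K
    induction K with
    | zero => simp
    | succ K ih =>
      rw [Finset.sum_range_succ, Function.iterate_succ_apply', Function.iterate_succ_apply']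
      have := step _ _ (hF.avi s K) (hG.avi s K) (avi_nonneg s F hF0 K) (avi_nonneg s G hG0 K)
      linarith
  have p : 0 ≤ ∫ x, B ((Av s)^[K] F x) ((Av s)^[K] G x) ∂μ :=
    integral_nonneg fun x => h2 _ _ (avi_nonneg s F hF0 K x) (avi_nonneg s G hG0 K x)
  have u : ∫ x, B (F x) (G x) ∂μ ≤ C * (∫ x, F x ^ q ∂μ + ∫ x, G x ^ r ∂μ) := by
    rw [← integral_add ((hF.rpow hq0).int μ) ((hG.rpow hr0).int μ), ← integral_const_mul]
    apply integral_mono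
    · exact CC.int μ (hF.comp2 hG B h1 B0)
    · exact CC.int μ (((hF.rpow hq0).add (hG.rpow hr0)).const_mul _)
    · intro x; exact h3 _ _ (hF0 x) (hG0 x)
  linarith [ind K]

/-- coefficients of the decomposition into positive parts -/
def pc : Fin 4 → ℂ := ![1, -1, Complex.I, -Complex.I]
def pp (z : ℂ) : Fin 4 → ℝ := ![max z.re 0, max (-z.re) 0, max z.im 0, max (-z.im) 0]

lemma pp_sum (z : ℂ) : ∑ k, pc k * (pp z k : ℂ) = z := by
  have h1 : ∀ a : ℝ, max a 0 - max (-a) 0 = a := fun a => by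
    rcases le_total a 0 with h | h
    · rw [max_eq_right h, max_eq_left (by linarith)]; ring
    · rw [max_eq_left h, max_eq_right (by linarith)]; ring
  simp only [Fin.sum_univ_four, pc, pp]
  apply Complex.ext
  · simpa [sub_eq_add_neg] using h1 z.re
  · simpa [sub_eq_add_neg] using h1 z.im

lemma pp_nonneg (z : ℂ) (k : Fin 4) : 0 ≤ pp z k := by fin_cases k <;> simp [pp]

lemma pp_le (z : ℂ) (k : Fin 4) : pp z k ≤ ‖z‖ := by
  have h1 := abs_le.1 (Complex.abs_re_le_norm z)
  have h2 := abs_le.1 (Complex.abs_im_le_norm z)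
  fin_cases k <;> simp [pp] <;> linarith [h1.1, h1.2, h2.1, h2.2]

lemma pc_norm (k : Fin 4) : ‖pc k‖ = 1 := by fin_cases k <;> simp [pc]

lemma pp_cont (k : Fin 4) : Continuous (fun z => pp z k) := by
  fin_cases k <;> simp [pp] <;> fun_prop

lemma pp_zero (k : Fin 4) : pp 0 k = 0 := by fin_cases k <;> simp [pp]

lemma avi_decomp (s : Fin 5 → E) (F : E → ℂ) (j : ℕ) (x : E) :
    (Av s)^[j] F x = ∑ k, pc k * (((Av s)^[j] (fun x => pp (F x) k) x : ℝ) : ℂ) := by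
  induction j generalizing x with
  | zero => exact (pp_sum (F x)).symm
  | succ j ih =>
    simp only [Function.iterate_succ_apply']
    simp only [Av]
    simp_rw [ih]
    rw [Finset.sum_comm, Finset.smul_sum]
    refine Finset.sum_congr rfl fun k _ => ?_
    rw [← Finset.mul_sum]
    simp
    ring

lemma embed_complex (q r : ℝ) (hqr : q.HolderConjugate r) :
    ∃ C : ℝ, 0 ≤ C ∧ ∀ (s : Fin 5 → E), s 0 = 0 → ∀ F G : E → ℂ, CC F → CC G →
      ∀ (i k : Fin 5) (K : ℕ),
      ∑ j ∈ Finset.range K, ∫ x, ‖(Av s)^[j] F (x + s i) - (Av s)^[j] F x‖ *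
        ‖(Av s)^[j] G (x + s k) - (Av s)^[j] G x‖ ∂μ ≤
      C * (∫ x, ‖F x‖ ^ q ∂μ + ∫ x, ‖G x‖ ^ r ∂μ) := by
  obtain ⟨C, hC, h⟩ := embed_pos μ q r hqr
  have hq0 : 0 < q := hqr.pos
  have hr0 : 0 < r := hqr.symm.pos
  refine ⟨16 * C, by positivity, ?_⟩
  intro s hs F G hF hG i k K
  have cF : ∀ m, CC (fun x => pp (F x) m) := fun m => hF.comp0 (fun z => pp z m) (pp_cont m) (pp_zero m)
  have cG : ∀ m, CC (fun x => pp (G x) m) := fun m => hG.comp0 (fun z => pp z m) (pp_cont m) (pp_zero m)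
  have bd : ∀ (H : E → ℂ) (j : ℕ) (x v : E), ‖(Av s)^[j] H (x + v) - (Av s)^[j] H x‖ ≤
      ∑ m, |(Av s)^[j] (fun x => pp (H x) m) (x + v) - (Av s)^[j] (fun x => pp (H x) m) x| := by
    intro H j x v
    rw [avi_decomp, avi_decomp, ← Finset.sum_sub_distrib]
    refine (norm_sum_le _ _).trans (Finset.sum_le_sum fun m _ => ?_)
    rw [← mul_sub, norm_mul, pc_norm, one_mul, ← Complex.ofReal_sub, Complex.norm_real, Real.norm_eq_abs]
  have cd : ∀ (H : E → ℝ) (hH : CC H) (j : ℕ) (v : E),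
      CC (fun x => |(Av s)^[j] H (x + v) - (Av s)^[j] H x|) := fun H hH j v =>
    (((hH.avi s j).trans v).sub (hH.avi s j)).norm
  have t1 : ∀ j, ∫ x, ‖(Av s)^[j] F (x + s i) - (Av s)^[j] F x‖ *
        ‖(Av s)^[j] G (x + s k) - (Av s)^[j] G x‖ ∂μ ≤
      ∑ m, ∑ l, ∫ x, |(Av s)^[j] (fun x => pp (F x) m) (x + s i) - (Av s)^[j] (fun x => pp (F x) m) x| *
        |(Av s)^[j] (fun x => pp (G x) l) (x + s k) - (Av s)^[j] (fun x => pp (G x) l) x| ∂μ := by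
    intro j
    have ci : ∀ m l, CC (fun x => |(Av s)^[j] (fun x => pp (F x) m) (x + s i) - (Av s)^[j] (fun x => pp (F x) m) x| *
        |(Av s)^[j] (fun x => pp (G x) l) (x + s k) - (Av s)^[j] (fun x => pp (G x) l) x|) := fun m l =>
      (cd _ (cF m) j _).mul (cd _ (cG l) j _)
    have e : ∑ m, ∑ l, ∫ x, |(Av s)^[j] (fun x => pp (F x) m) (x + s i) - (Av s)^[j] (fun x => pp (F x) m) x| *
        |(Av s)^[j] (fun x => pp (G x) l) (x + s k) - (Av s)^[j] (fun x => pp (G x) l) x| ∂μ =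
        ∫ x, ∑ m, ∑ l, |(Av s)^[j] (fun x => pp (F x) m) (x + s i) - (Av s)^[j] (fun x => pp (F x) m) x| *
        |(Av s)^[j] (fun x => pp (G x) l) (x + s k) - (Av s)^[j] (fun x => pp (G x) l) x| ∂μ := by
      rw [integral_finsetSum _ (fun m _ => (CC.sum Finset.univ (fun l => ci m l)).int μ)]
      refine Finset.sum_congr rfl fun m _ => ?_
      rw [integral_finsetSum _ (fun l _ => (ci m l).int μ)]
    rw [e]
    apply integral_mono
    · exact CC.int μ ((((hF.avi s j).trans _).sub (hF.avi s j)).norm.mul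
        (((hG.avi s j).trans _).sub (hG.avi s j)).norm)
    · exact CC.int μ (CC.sum Finset.univ (fun m => CC.sum Finset.univ (fun l => ci m l)))
    · intro x
      dsimp only
      rw [← Finset.sum_mul_sum]
      exact mul_le_mul (bd F j x _) (bd G j x _) (norm_nonneg _) (Finset.sum_nonneg fun _ _ => abs_nonneg _)
  have mono : ∀ (H : E → ℂ) (hH : CC H) (p : ℝ) (hp : 0 < p) (m : Fin 4),
      ∫ x, pp (H x) m ^ p ∂μ ≤ ∫ x, ‖H x‖ ^ p ∂μ := by
    intro H hH p hp m
    apply integral_mono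
    · exact CC.int μ ((hH.comp0 (fun z => pp z m) (pp_cont m) (pp_zero m)).rpow hp)
    · exact CC.int μ (hH.norm.rpow hp)
    · intro x
      exact Real.rpow_le_rpow (pp_nonneg _ _) (pp_le _ _) hp.le
  calc _ ≤ ∑ j ∈ Finset.range K, ∑ m, ∑ l, ∫ x, |(Av s)^[j] (fun x => pp (F x) m) (x + s i) - (Av s)^[j] (fun x => pp (F x) m) x| *
        |(Av s)^[j] (fun x => pp (G x) l) (x + s k) - (Av s)^[j] (fun x => pp (G x) l) x| ∂μ :=
        Finset.sum_le_sum fun j _ => t1 j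
    _ = ∑ m, ∑ l, ∑ j ∈ Finset.range K, ∫ x, |(Av s)^[j] (fun x => pp (F x) m) (x + s i) - (Av s)^[j] (fun x => pp (F x) m) x| *
        |(Av s)^[j] (fun x => pp (G x) l) (x + s k) - (Av s)^[j] (fun x => pp (G x) l) x| ∂μ := by
        rw [Finset.sum_comm]; refine Finset.sum_congr rfl fun m _ => ?_; rw [Finset.sum_comm]
    _ ≤ ∑ m : Fin 4, ∑ l : Fin 4, C * (∫ x, ‖F x‖ ^ q ∂μ + ∫ x, ‖G x‖ ^ r ∂μ) := by
        refine Finset.sum_le_sum fun m _ => Finset.sum_le_sum fun l _ => ?_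
        refine (h s hs _ _ (cF m) (cG l) (fun x => pp_nonneg _ _) (fun x => pp_nonneg _ _) i k K).trans ?_
        exact mul_le_mul_of_nonneg_left (add_le_add (mono F hF q hq0 m) (mono G hG r hr0 l)) hC
    _ = _ := by simp; ring

end averaging

section discrete

variable {E : Type*} [NormedAddCommGroup E] [NormedSpace ℝ E] [FiniteDimensional ℝ E]
  [MeasurableSpace E] [BorelSpace E]

/-- Finite linear combination of translates. -/
def Cv {ι : Type} [Fintype ι] (c : ι → ℂ) (t : ι → E) (f : E → ℂ) (x : E) : ℂ :=
  ∑ k, c k * f (x + t k)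

lemma Cv_comm {ι κ : Type} [Fintype ι] [Fintype κ] (c : ι → ℂ) (t : ι → E) (d : κ → ℂ) (s : κ → E)
    (f : E → ℂ) : Cv c t (Cv d s f) = Cv d s (Cv c t f) := by
  funext x
  simp only [Cv, Finset.mul_sum]
  rw [Finset.sum_comm]
  refine Finset.sum_congr rfl fun i _ => Finset.sum_congr rfl fun j _ => ?_
  rw [add_right_comm]; ring

lemma Av_eq_Cv (s : Fin 5 → E) (f : E → ℂ) : Av s f = Cv (fun _ => (1 / 5 : ℂ)) s f := by
  funext x
  simp only [Av, Cv, ← Finset.mul_sum]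
  rw [Complex.real_smul]; push_cast; rfl

lemma Av_comm_Cv {ι : Type} [Fintype ι] (c : ι → ℂ) (t : ι → E) (s : Fin 5 → E) (f : E → ℂ) (j : ℕ) :
    (Av s)^[j] (Cv c t f) = Cv c t ((Av s)^[j] f) := by
  have h : Function.Commute (Av s) (Cv c t : (E → ℂ) → (E → ℂ)) := fun f => by
    rw [Av_eq_Cv, Av_eq_Cv, Cv_comm]
  exact (h.iterate_left j) f

lemma Av_trans (s : Fin 5 → E) (f : E → ℂ) (v : E) (j : ℕ) :
    (Av s)^[j] (fun x => f (x + v)) = fun x => (Av s)^[j] f (x + v) := by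
  have := Av_comm_Cv (fun _ : Fin 1 => (1 : ℂ)) (fun _ => v) s f j
  have e : ∀ g : E → ℂ, Cv (fun _ : Fin 1 => (1 : ℂ)) (fun _ => v) g = fun x => g (x + v) := fun g => by
    funext x; simp [Cv]
  rwa [e, e] at this

lemma CC.cv {ι : Type} [Fintype ι] {f : E → ℂ} (h : CC f) (c : ι → ℂ) (t : ι → E) : CC (Cv c t f) :=
  CC.sum Finset.univ (fun k => (h.trans (t k)).const_mul (c k))

lemma Cv_add {ι : Type} [Fintype ι] (c : ι → ℂ) (t : ι → E) (f g : E → ℂ) :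
    Cv c t (fun x => f x + g x) = fun x => Cv c t f x + Cv c t g x := by
  funext x
  simp [Cv, mul_add, Finset.sum_add_distrib]

lemma Cv_sub {ι : Type} [Fintype ι] (c : ι → ℂ) (t : ι → E) (f g : E → ℂ) :
    Cv c t (fun x => f x - g x) = fun x => Cv c t f x - Cv c t g x := by
  funext x
  simp [Cv, mul_sub, Finset.sum_sub_distrib]

variable (μ : Measure E) [μ.IsAddHaarMeasure]

lemma Cv_adj {ι : Type} [Fintype ι] (c : ι → ℂ) (t : ι → E) {f g : E → ℂ} (hf : CC f) (hg : CC g) :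
    ∫ x, Cv c t f x * g x ∂μ = ∫ x, f x * Cv c (fun k => - t k) g x ∂μ := by
  simp only [Cv, Finset.sum_mul, Finset.mul_sum]
  rw [integral_finsetSum _ (fun k _ => CC.int μ (((hf.trans (t k)).const_mul (c k)).mul hg)),
    integral_finsetSum _ (fun k _ => CC.int μ (hf.mul ((hg.trans (- t k)).const_mul (c k))))]
  refine Finset.sum_congr rfl fun k _ => ?_
  rw [← integral_add_right_eq_self (fun x => f x * (c k * g (x + -t k))) (t k)]
  congr 1; funext x; simp; ring

/-- Five point stencil. -/
def st (e1 e2 : E) : Fin 5 → E := ![0, e1 + e1, -(e1 + e1), e2 + e2, -(e2 + e2)]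
def tt (e1 e2 : E) : Fin 4 → E := ![e1, -e1, e2, -e2]
def cz : Fin 4 → ℂ := ![1, -1, -Complex.I, Complex.I]
def czb : Fin 4 → ℂ := ![1, -1, Complex.I, -Complex.I]

lemma dz_adj (e1 e2 : E) {f g : E → ℂ} (hf : CC f) (hg : CC g) :
    ∫ x, Cv cz (tt e1 e2) f x * g x ∂μ = - ∫ x, f x * Cv cz (tt e1 e2) g x ∂μ := by
  rw [Cv_adj μ _ _ hf hg, ← integral_neg]
  congr 1; funext x
  simp [Cv, Fin.sum_univ_four, cz, tt]
  ring

lemma av_adj (e1 e2 : E) {f g : E → ℂ} (hf : CC f) (hg : CC g) :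
    ∫ x, Av (st e1 e2) f x * g x ∂μ = ∫ x, f x * Av (st e1 e2) g x ∂μ := by
  rw [Av_eq_Cv, Av_eq_Cv, Cv_adj μ _ _ hf hg]
  congr 1; funext x
  simp [Cv, Fin.sum_univ_five, st]
  left; ring

lemma av_adj_iter (e1 e2 : E) {f g : E → ℂ} (hf : CC f) (hg : CC g) (j : ℕ) :
    ∫ x, (Av (st e1 e2))^[j] f x * g x ∂μ = ∫ x, f x * (Av (st e1 e2))^[j] g x ∂μ := by
  induction j generalizing g with
  | zero => rfl
  | succ j ih =>
    rw [Function.iterate_succ_apply', av_adj μ e1 e2 (hf.avi _ j) hg, ih (hg.av _),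
      Function.iterate_succ_apply]

lemma sub_av (e1 e2 : E) (w : E → ℂ) (x : E) :
    w x - Av (st e1 e2) w x = -(1 / 5) * Cv cz (tt e1 e2) (Cv czb (tt e1 e2) w) x := by
  rw [Av_eq_Cv]
  have h : ∀ a b : E, x + a + b = x + (a + b) := fun a b => add_assoc _ _ _
  simp [Cv, Fin.sum_univ_four, Fin.sum_univ_five, cz, czb, tt, st]
  have h1 : x + e1 + e2 = x + e2 + e1 := by abel
  have h2 : x + -e1 + e2 = x + e2 + -e1 := by abel
  have h3 : x + e1 + -e2 = x + -e2 + e1 := by abel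
  have h4 : x + -e1 + -e2 = x + -e2 + -e1 := by abel
  have h5 : x + (e1 + e1) = x + e1 + e1 := by abel
  have h6 : x + (e2 + e2) = x + e2 + e2 := by abel
  have h7 : x + (-e1 + -e1) = x + -e1 + -e1 := by abel
  have h8 : x + (-e2 + -e2) = x + -e2 + -e2 := by abel
  simp only [h1, h2, h3, h4, h5, h6, h7, h8]
  ring_nf
  simp
  ring

lemma one_step (e1 e2 : E) {φ G : E → ℂ} (hφ : CC φ) (hG : CC G) :
    ∫ x, Cv cz (tt e1 e2) φ x * G x ∂μ -
      ∫ x, Av (st e1 e2) (Cv cz (tt e1 e2) φ) x * Av (st e1 e2) G x ∂μ =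
    (1 / 5) * ∫ x, Cv cz (tt e1 e2) (fun y => Cv czb (tt e1 e2) φ y +
        Av (st e1 e2) (Cv czb (tt e1 e2) φ) y) x * Cv cz (tt e1 e2) G x ∂μ := by
  set s := st e1 e2
  set t := tt e1 e2
  have hu : CC (Cv cz t φ) := hφ.cv _ _
  have hf : CC (Cv czb t φ) := hφ.cv _ _
  rw [← av_adj μ e1 e2 (hu.av _) hG, ← integral_sub (CC.int μ (hu.mul hG)) (CC.int μ (((hu.av s).av s).mul hG))]
  have hF : CC (fun y => Cv czb t φ y + Av s (Cv czb t φ) y) := hf.add (hf.av s)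
  have h2 := dz_adj μ e1 e2 (hF.cv cz t) hG
  have h3 : ∫ x, Cv cz t (fun y => Cv czb t φ y + Av s (Cv czb t φ) y) x * Cv cz t G x ∂μ =
      - ∫ x, Cv cz t (Cv cz t (fun y => Cv czb t φ y + Av s (Cv czb t φ) y)) x * G x ∂μ := by
    rw [h2, neg_neg]
  rw [h3, ← integral_neg, ← integral_const_mul]
  congr 1; funext x
  have a1 := sub_av e1 e2 (Cv cz t φ) x
  have a2 := sub_av e1 e2 (Av s (Cv cz t φ)) x
  have a3 : Av s (Cv cz t φ) = Cv cz t (Av s φ) := Av_comm_Cv cz t s φ 1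
  have a4 : Av s (Cv czb t φ) = Cv czb t (Av s φ) := Av_comm_Cv czb t s φ 1
  rw [Cv_add, Cv_add]
  have a5 : Cv czb t (Cv cz t φ) = Cv cz t (Cv czb t φ) := Cv_comm _ _ _ _ _
  have a6 : Cv czb t (Cv cz t (Av s φ)) = Cv cz t (Cv czb t (Av s φ)) := Cv_comm _ _ _ _ _
  change _ = -(1 / 5) * Cv cz t (Cv czb t (Cv cz t φ)) x at a1
  change _ = -(1 / 5) * Cv cz t (Cv czb t (Av s (Cv cz t φ))) x at a2
  rw [a5] at a1
  rw [a3, a6] at a2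
  rw [a3] at a1
  rw [a3, a4]
  linear_combination (G x) * a1 + (G x) * a2


lemma telesc (e1 e2 : E) {φ G : E → ℂ} (hφ : CC φ) (hG : CC G) (K : ℕ) :
    ∫ x, Cv cz (tt e1 e2) φ x * G x ∂μ =
      (1 / 5) * ∑ j ∈ Finset.range K, ∫ x, Cv cz (tt e1 e2) ((Av (st e1 e2))^[j] (fun y => Cv czb (tt e1 e2) φ y +
        Av (st e1 e2) (Cv czb (tt e1 e2) φ) y)) x * Cv cz (tt e1 e2) ((Av (st e1 e2))^[j] G) x ∂μ +
      ∫ x, (Av (st e1 e2))^[K] (Cv cz (tt e1 e2) φ) x * (Av (st e1 e2))^[K] G x ∂μ := by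
  induction K with
  | zero => simp
  | succ K ih =>
    rw [ih, Finset.sum_range_succ]
    have := one_step μ e1 e2 (hφ.avi (st e1 e2) K) (hG.avi (st e1 e2) K)
    set s := st e1 e2
    set t := tt e1 e2
    have a1 : (Av s)^[K] (fun y => Cv czb t φ y + Av s (Cv czb t φ) y) =
        (fun y => Cv czb t ((Av s)^[K] φ) y + Av s (Cv czb t ((Av s)^[K] φ)) y) := by
      have e1 : (fun y => Cv czb t φ y + Av s (Cv czb t φ) y) = Cv czb t (fun y => φ y + Av s φ y) := by
        rw [Cv_add, ← show Av s (Cv czb t φ) = Cv czb t (Av s φ) from Av_comm_Cv czb t s φ 1]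
      have e2 : (fun y => Cv czb t ((Av s)^[K] φ) y + Av s (Cv czb t ((Av s)^[K] φ)) y) =
          Cv czb t (fun y => (Av s)^[K] φ y + Av s ((Av s)^[K] φ) y) := by
        rw [Cv_add, ← show Av s (Cv czb t ((Av s)^[K] φ)) = Cv czb t (Av s ((Av s)^[K] φ)) from Av_comm_Cv czb t s _ 1]
      rw [e1, e2, Av_comm_Cv]
      congr 1
      have e3 : ∀ f : E → ℂ, (fun y => f y + Av s f y) =
          Cv (fun i : Option (Fin 5) => i.elim 1 (fun _ => 1 / 5)) (fun i => i.elim 0 s) f := fun f => by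
        funext y; rw [Av_eq_Cv]; simp [Cv, Fintype.sum_option]
      rw [e3, e3, Av_comm_Cv]
    rw [a1, Function.iterate_succ_apply', Function.iterate_succ_apply', Av_comm_Cv]
    linear_combination this

/-- Symmetric difference. -/
def Dd (e : E) (f : E → ℂ) (x : E) : ℂ := f (x + e) - f (x - e)

lemma CC.dd {f : E → ℂ} (h : CC f) (e : E) : CC (Dd e f) := by
  have := (h.trans e).sub (h.trans (-e))
  have e2 : Dd e f = fun x => f (x + e) - f (x + -e) := by funext x; simp [Dd, sub_eq_add_neg]
  rw [e2]; exact this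

lemma dz_le (e1 e2 : E) (f : E → ℂ) (x : E) :
    ‖Cv cz (tt e1 e2) f x‖ ≤ ∑ k : Fin 2, ‖Dd (![e1, e2] k) f x‖ := by
  have : Cv cz (tt e1 e2) f x = Dd e1 f x - Complex.I * Dd e2 f x := by
    simp [Cv, cz, tt, Dd, Fin.sum_univ_four, sub_eq_add_neg]; ring
  rw [this]
  refine (norm_sub_le _ _).trans ?_
  simp [Fin.sum_univ_two]

lemma cvz_eq (e1 e2 : E) (f : E → ℂ) (x : E) :
   Cv cz (tt e1 e2) f x = Dd e1 f x - Complex.I * Dd e2 f x := by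
  simp [Cv, cz, tt, Dd, Fin.sum_univ_four, sub_eq_add_neg]; ring

lemma cvzb_eq (e1 e2 : E) (f : E → ℂ) (x : E) :
   Cv czb (tt e1 e2) f x = Dd e1 f x + Complex.I * Dd e2 f x := by
  simp [Cv, czb, tt, Dd, Fin.sum_univ_four, sub_eq_add_neg]; ring

lemma st_idx (e1 e2 : E) (k : Fin 2) : st e1 e2 (![1, 3] k) = ![e1, e2] k + ![e1, e2] k := by
  fin_cases k <;> simp [st]

lemma dd_embed (q r : ℝ) (hqr : q.HolderConjugate r) :
    ∃ C : ℝ, 0 ≤ C ∧ ∀ (e1 e2 : E), ∀ F G : E → ℂ, CC F → CC G →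
      ∀ (k l : Fin 2) (K : ℕ),
      ∑ j ∈ Finset.range K, ∫ x, ‖Dd (![e1, e2] k) ((Av (st e1 e2))^[j] F) x‖ *
        ‖Dd (![e1, e2] l) ((Av (st e1 e2))^[j] G) x‖ ∂μ ≤
      C * (∫ x, ‖F x‖ ^ q ∂μ + ∫ x, ‖G x‖ ^ r ∂μ) := by
  obtain ⟨C, hC, h⟩ := embed_complex μ q r hqr
  refine ⟨C, hC, fun e1 e2 F G hF hG k l K => ?_⟩
  set a := ![e1, e2] k
  set b := ![e1, e2] l
  have := h (st e1 e2) rfl F (fun x => G (x + (a - b))) hF (hG.trans _) (![1, 3] k) (![1, 3] l) K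
  rw [integral_add_right_eq_self (fun x => ‖G x‖ ^ r)] at this
  refine le_trans (le_of_eq (Finset.sum_congr rfl fun j _ => ?_)) this
  rw [Av_trans, ← integral_add_right_eq_self _ a]
  congr 1; funext x
  rw [st_idx, st_idx]
  simp only [Dd]
  congr 3 <;> congr 2 <;> simp only [a, b] <;> abel

lemma rpow_F (q : ℝ) (hq : 1 ≤ q) : ∃ C : ℝ, 0 ≤ C ∧ ∀ (e1 e2 : E) (f : E → ℂ), CC f →
    ∫ x, ‖f x + Av (st e1 e2) f x‖ ^ q ∂μ ≤ C * ∫ x, ‖f x‖ ^ q ∂μ := by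
  have hq0 : 0 < q := by linarith
  refine ⟨2 ^ q * ((5 : ℝ) ^ (q - 1) * 5), by positivity, fun e1 e2 f hf => ?_⟩
  have hc : ∀ k, CC (fun x => ‖f (x + st e1 e2 k)‖ ^ q) := fun k => (hf.trans _).norm.rpow hq0
  have : ∫ x, ‖f x + Av (st e1 e2) f x‖ ^ q ∂μ ≤
      ∫ x, 2 ^ q * ((5 : ℝ) ^ (q - 1) * ∑ k, ‖f (x + st e1 e2 k)‖ ^ q) ∂μ := by
    apply integral_mono
    · exact CC.int μ ((hf.add (hf.av _)).norm.rpow hq0)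
    · exact CC.int μ (((CC.sum Finset.univ hc).const_mul _).const_mul _)
    · intro x
      dsimp only
      have h1 : ‖f x + Av (st e1 e2) f x‖ ≤ 2 * ∑ k, |‖f (x + st e1 e2 k)‖| := by
        simp only [abs_norm]
        have h2 : ‖f x‖ ≤ ∑ k, ‖f (x + st e1 e2 k)‖ := by
          have := Finset.single_le_sum (f := fun k => ‖f (x + st e1 e2 k)‖) (fun k _ => norm_nonneg _) (Finset.mem_univ 0)
          simpa [st] using this
        have h3 : ‖Av (st e1 e2) f x‖ ≤ ∑ k, ‖f (x + st e1 e2 k)‖ := by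
          rw [Av, norm_smul]
          refine (mul_le_of_le_one_left (norm_nonneg _) (by norm_num)).trans (norm_sum_le _ _)
        linarith [norm_add_le (f x) (Av (st e1 e2) f x)]
      refine (Real.rpow_le_rpow (norm_nonneg _) h1 hq0.le).trans ?_
      rw [Real.mul_rpow (by norm_num) (Finset.sum_nonneg fun _ _ => abs_nonneg _)]
      refine mul_le_mul_of_nonneg_left ?_ (by positivity)
      have := Real.rpow_sum_le_const_mul_sum_rpow Finset.univ (fun k => ‖f (x + st e1 e2 k)‖) hq
      simpa using this
  refine this.trans (le_of_eq ?_)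
  rw [integral_const_mul, integral_const_mul, integral_finsetSum _ (fun k _ => (hc k).int μ)]
  have : ∀ k, ∫ x, ‖f (x + st e1 e2 k)‖ ^ q ∂μ = ∫ x, ‖f x‖ ^ q ∂μ := fun l =>
        integral_add_right_eq_self (fun x => ‖f x‖ ^ q) _
  simp [this]; ring

lemma two_conj : (2 : ℝ).HolderConjugate 2 := by
  constructor <;> norm_num

lemma decay (e1 e2 : E) {φ : E → ℂ} (hφ : CC φ) :
    Filter.Tendsto (fun K => ∫ x, ‖(Av (st e1 e2))^[K] (Cv cz (tt e1 e2) φ) x‖ ^ 2 ∂μ) Filter.atTop (nhds 0) := by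
  obtain ⟨C, hC, h⟩ := dd_embed μ 2 2 two_conj
  have t : ∀ k : Fin 2, Filter.Tendsto (fun j => ∫ x, ‖Dd (![e1, e2] k) ((Av (st e1 e2))^[j] φ) x‖ *
        ‖Dd (![e1, e2] k) ((Av (st e1 e2))^[j] φ) x‖ ∂μ) Filter.atTop (nhds 0) := fun k =>
    (summable_of_sum_range_le (fun j => integral_nonneg fun x => by positivity)
      (fun K => h e1 e2 φ φ hφ hφ k k K)).tendsto_atTop_zero
  have t2 := ((t 0).add (t 1)).const_mul 2
  simp only [add_zero, mul_zero] at t2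
  have cd : ∀ k j, CC (fun x => ‖Dd (![e1, e2] k) ((Av (st e1 e2))^[j] φ) x‖ *
        ‖Dd (![e1, e2] k) ((Av (st e1 e2))^[j] φ) x‖) := fun k j =>
    ((hφ.avi _ j).dd _).norm.mul ((hφ.avi _ j).dd _).norm
  refine squeeze_zero (fun K => integral_nonneg fun x => by positivity) (fun K => ?_) t2
  rw [← integral_add ((cd 0 K).int μ) ((cd 1 K).int μ), ← integral_const_mul]
  apply integral_mono
  · have := ((hφ.cv cz (tt e1 e2)).avi (st e1 e2) K).norm
    simpa only [sq] using CC.int μ (this.mul this)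
  · exact CC.int μ (((cd 0 K).add (cd 1 K)).const_mul 2)
  · intro x
    dsimp only
    rw [Av_comm_Cv]
    have := dz_le e1 e2 ((Av (st e1 e2))^[K] φ) x
    rw [Fin.sum_univ_two] at this
    have := pow_le_pow_left₀ (norm_nonneg _) this 2
    nlinarith [sq_nonneg (‖Dd (![e1, e2] 0) ((Av (st e1 e2))^[K] φ) x‖ - ‖Dd (![e1, e2] 1) ((Av (st e1 e2))^[K] φ) x‖)]

lemma remainder (e1 e2 : E) {φ G : E → ℂ} (hφ : CC φ) (hG : CC G) :
    Filter.Tendsto (fun K => ∫ x, (Av (st e1 e2))^[K] (Cv cz (tt e1 e2) φ) x * (Av (st e1 e2))^[K] G x ∂μ)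
      Filter.atTop (nhds 0) := by
  have e : ∀ K, ∫ x, (Av (st e1 e2))^[K] (Cv cz (tt e1 e2) φ) x * (Av (st e1 e2))^[K] G x ∂μ =
      ∫ x, (Av (st e1 e2))^[K + K] (Cv cz (tt e1 e2) φ) x * G x ∂μ := fun K => by
    rw [← av_adj_iter μ e1 e2 ((hφ.cv _ _).avi _ K) hG, Function.iterate_add_apply]
  simp_rw [e]
  have hd : Filter.Tendsto (fun K => ∫ x, ‖(Av (st e1 e2))^[K + K] (Cv cz (tt e1 e2) φ) x‖ ^ 2 ∂μ) Filter.atTop (nhds 0) :=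
    (decay μ e1 e2 hφ).comp (Filter.tendsto_id.atTop_add_atTop Filter.tendsto_id)
  rw [Metric.tendsto_atTop]
  intro ε hε
  set S := ∫ x, ‖G x‖ ^ 2 ∂μ with hS
  have hS0 : 0 ≤ S := integral_nonneg fun x => by positivity
  set δ := ε / (S + 1) with hδ
  have hδ0 : 0 < δ := by positivity
  obtain ⟨N, hN⟩ := (Metric.tendsto_atTop.1 hd) (ε * δ) (by positivity)
  refine ⟨N, fun K hK => ?_⟩
  have h1 := hN K hK
  rw [Real.dist_eq, sub_zero] at h1
  have h1 := (le_abs_self _).trans_lt h1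
  rw [dist_zero_right]
  have cu : CC ((Av (st e1 e2))^[K + K] (Cv cz (tt e1 e2) φ)) := (hφ.cv _ _).avi _ _
  set u := (Av (st e1 e2))^[K + K] (Cv cz (tt e1 e2) φ)
  have cu2 : CC (fun x => ‖u x‖ ^ 2) := by simpa only [sq] using cu.norm.mul cu.norm
  have cG2 : CC (fun x => ‖G x‖ ^ 2) := by simpa only [sq] using hG.norm.mul hG.norm
  have h2 : ‖∫ x, u x * G x ∂μ‖ ≤ ∫ x, ((1 / (2 * δ)) * ‖u x‖ ^ 2 + (δ / 2) * ‖G x‖ ^ 2) ∂μ := by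
    refine (norm_integral_le_integral_norm _).trans ?_
    apply integral_mono
    · exact CC.int μ (cu.mul hG).norm
    · exact CC.int μ ((cu2.const_mul _).add (cG2.const_mul _))
    · intro x
      dsimp only
      rw [norm_mul]
      have : (1 / (2 * δ)) * ‖u x‖ ^ 2 + (δ / 2) * ‖G x‖ ^ 2 - ‖u x‖ * ‖G x‖ = (1 / (2 * δ)) * (‖u x‖ - δ * ‖G x‖) ^ 2 := by
        field_simp; ring
      have h3 : 0 ≤ (1 / (2 * δ)) * (‖u x‖ - δ * ‖G x‖) ^ 2 := by positivity
      linarith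
  rw [integral_add (CC.int μ (cu2.const_mul _)) (CC.int μ (cG2.const_mul _)), integral_const_mul, integral_const_mul] at h2
  refine h2.trans_lt ?_
  have h4 : (1 / (2 * δ)) * ∫ x, ‖u x‖ ^ 2 ∂μ < (1 / (2 * δ)) * (ε * δ) := mul_lt_mul_of_pos_left h1 (by positivity)
  have h5 : (1 / (2 * δ)) * (ε * δ) = ε / 2 := by field_simp
  have h6 : δ * (S + 1) = ε := by rw [hδ]; field_simp
  nlinarith

lemma bilin (q r : ℝ) (hqr : q.HolderConjugate r) :
    ∃ C : ℝ, 0 ≤ C ∧ ∀ (e1 e2 : E), ∀ φ G : E → ℂ, CC φ → CC G →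
      ‖∫ x, Cv cz (tt e1 e2) φ x * G x ∂μ‖ ≤
      C * (∫ x, ‖Cv czb (tt e1 e2) φ x‖ ^ q ∂μ + ∫ x, ‖G x‖ ^ r ∂μ) := by
  obtain ⟨C, hC, h⟩ := dd_embed μ q r hqr
  obtain ⟨C', hC', h'⟩ := rpow_F μ q hqr.lt.le
  refine ⟨C * (C' + 1), by positivity, fun e1 e2 φ G hφ hG => ?_⟩
  have hf := hφ.cv czb (tt e1 e2)
  have hF := hf.add (hf.av (st e1 e2))
  have h2 := h' e1 e2 _ hf
  set F := fun y => Cv czb (tt e1 e2) φ y + Av (st e1 e2) (Cv czb (tt e1 e2) φ) y with hFdef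
  set X := ∫ x, ‖Cv czb (tt e1 e2) φ x‖ ^ q ∂μ with hX
  set Y := ∫ x, ‖G x‖ ^ r ∂μ with hY
  have hX0 : 0 ≤ X := integral_nonneg fun x => by positivity
  have hY0 : 0 ≤ Y := integral_nonneg fun x => by positivity
  have hs : ∀ K, ∑ j ∈ Finset.range K, ‖∫ x, Cv cz (tt e1 e2) ((Av (st e1 e2))^[j] F) x * Cv cz (tt e1 e2) ((Av (st e1 e2))^[j] G) x ∂μ‖ ≤
      4 * (C * (C' * X + Y)) := by
    intro K
    have t1 : ∀ j, ‖∫ x, Cv cz (tt e1 e2) ((Av (st e1 e2))^[j] F) x * Cv cz (tt e1 e2) ((Av (st e1 e2))^[j] G) x ∂μ‖ ≤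
        ∑ k : Fin 2, ∑ l : Fin 2, ∫ x, ‖Dd (![e1, e2] k) ((Av (st e1 e2))^[j] F) x‖ *
        ‖Dd (![e1, e2] l) ((Av (st e1 e2))^[j] G) x‖ ∂μ := by
      intro j
      have cF := hF.avi (st e1 e2) j
      have cG := hG.avi (st e1 e2) j
      have ci : ∀ k l : Fin 2, CC (fun x => ‖Dd (![e1, e2] k) ((Av (st e1 e2))^[j] F) x‖ *
        ‖Dd (![e1, e2] l) ((Av (st e1 e2))^[j] G) x‖) := fun k l => (cF.dd _).norm.mul (cG.dd _).norm
      have e : ∑ k : Fin 2, ∑ l : Fin 2, ∫ x, ‖Dd (![e1, e2] k) ((Av (st e1 e2))^[j] F) x‖ *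
        ‖Dd (![e1, e2] l) ((Av (st e1 e2))^[j] G) x‖ ∂μ = ∫ x, ∑ k : Fin 2, ∑ l : Fin 2, ‖Dd (![e1, e2] k) ((Av (st e1 e2))^[j] F) x‖ *
        ‖Dd (![e1, e2] l) ((Av (st e1 e2))^[j] G) x‖ ∂μ := by
        rw [integral_finsetSum _ (fun m _ => (CC.sum Finset.univ (fun l => ci m l)).int μ)]
        refine Finset.sum_congr rfl fun m _ => ?_
        rw [integral_finsetSum _ (fun l _ => (ci m l).int μ)]
      rw [e]
      refine (norm_integral_le_integral_norm _).trans ?_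
      apply integral_mono
      · exact CC.int μ ((cF.cv _ _).mul (cG.cv _ _)).norm
      · exact CC.int μ (CC.sum Finset.univ (fun m => CC.sum Finset.univ (fun l => ci m l)))
      · intro x
        dsimp only
        rw [← Finset.sum_mul_sum, norm_mul]
        exact mul_le_mul (dz_le _ _ _ _) (dz_le _ _ _ _) (norm_nonneg _) (Finset.sum_nonneg fun _ _ => norm_nonneg _)
    calc _ ≤ ∑ j ∈ Finset.range K, ∑ k : Fin 2, ∑ l : Fin 2, ∫ x, ‖Dd (![e1, e2] k) ((Av (st e1 e2))^[j] F) x‖ *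
        ‖Dd (![e1, e2] l) ((Av (st e1 e2))^[j] G) x‖ ∂μ := Finset.sum_le_sum fun j _ => t1 j
      _ = ∑ k : Fin 2, ∑ l : Fin 2, ∑ j ∈ Finset.range K, ∫ x, ‖Dd (![e1, e2] k) ((Av (st e1 e2))^[j] F) x‖ *
        ‖Dd (![e1, e2] l) ((Av (st e1 e2))^[j] G) x‖ ∂μ := by
          rw [Finset.sum_comm]; refine Finset.sum_congr rfl fun m _ => ?_; rw [Finset.sum_comm]
      _ ≤ ∑ k : Fin 2, ∑ l : Fin 2, C * (C' * X + Y) := by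
          refine Finset.sum_le_sum fun m _ => Finset.sum_le_sum fun l _ => ?_
          refine (h e1 e2 F G hF hG m l K).trans ?_
          exact mul_le_mul_of_nonneg_left (add_le_add h2 le_rfl) hC
      _ = _ := by simp; ring
  have hl := (remainder μ e1 e2 hφ hG).norm
  rw [norm_zero] at hl
  have hl2 := hl.const_add ((1 / 5) * (4 * (C * (C' * X + Y))))
  have hle := ge_of_tendsto' hl2 (b := ‖∫ x, Cv cz (tt e1 e2) φ x * G x ∂μ‖) (fun K => by
    rw [telesc μ e1 e2 hφ hG K]
    refine (norm_add_le _ _).trans (add_le_add ?_ le_rfl)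
    rw [norm_mul]
    have : ‖(1 / 5 : ℂ)‖ = 1 / 5 := by norm_num
    rw [this]
    exact mul_le_mul_of_nonneg_left ((norm_sum_le _ _).trans (hs K)) (by norm_num))
  refine hle.trans ?_
  have : 0 ≤ C * C' * Y := by positivity
  have : 0 ≤ C * C' * X := by positivity
  have : 0 ≤ C * X := by positivity
  have : 0 ≤ C * Y := by positivity
  nlinarith


lemma dual_norm (q : ℝ) (hq : 1 < q) (z : ℂ) : ‖conj z * ((‖z‖ ^ (q - 2) : ℝ) : ℂ)‖ = ‖z‖ ^ (q - 1) := by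
  rw [norm_mul, RCLike.norm_conj, Complex.norm_real, Real.norm_eq_abs, abs_of_nonneg (by positivity)]
  rcases eq_or_ne z 0 with rfl | hz
  · simp [Real.zero_rpow (by linarith : q - 1 ≠ 0)]
  · have : 0 < ‖z‖ := norm_pos_iff.2 hz
    rw [show q - 1 = 1 + (q - 2) by ring, Real.rpow_add this, Real.rpow_one]

lemma dual_mul (q : ℝ) (hq : 1 < q) (z : ℂ) : z * (conj z * ((‖z‖ ^ (q - 2) : ℝ) : ℂ)) = ((‖z‖ ^ q : ℝ) : ℂ) := by
  rcases eq_or_ne z 0 with rfl | hz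
  · simp [Real.zero_rpow (by linarith : q ≠ 0)]
  · have : 0 < ‖z‖ := norm_pos_iff.2 hz
    rw [← mul_assoc, Complex.mul_conj, Complex.normSq_eq_norm_sq, ← Complex.ofReal_mul]
    congr 1
    rw [show q = 2 + (q - 2) by ring, Real.rpow_add this, Real.rpow_two]
    ring_nf

lemma dual_cont (q : ℝ) (hq : 1 < q) : Continuous (fun z : ℂ => conj z * ((‖z‖ ^ (q - 2) : ℝ) : ℂ)) := by
  rw [continuous_iff_continuousAt]
  intro z
  rcases eq_or_ne z 0 with rfl | hz
  · rw [ContinuousAt]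
    simp only [map_zero, zero_mul]
    rw [tendsto_zero_iff_norm_tendsto_zero]
    simp_rw [dual_norm q hq]
    have : Continuous (fun z : ℂ => ‖z‖ ^ (q - 1)) :=
      (Real.continuous_rpow_const (by linarith)).comp continuous_norm
    have h := this.tendsto 0
    simpa [Real.zero_rpow (by linarith : q - 1 ≠ 0)] using h
  · have h1 : ContinuousAt (fun z : ℂ => ‖z‖ ^ (q - 2)) z :=
      (Real.continuousAt_rpow_const _ _ (Or.inl (norm_pos_iff.2 hz).ne')).comp continuous_norm.continuousAt
    exact Complex.continuous_conj.continuousAt.mul (Complex.continuous_ofReal.continuousAt.comp h1)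

lemma disc (q r : ℝ) (hqr : q.HolderConjugate r) :
    ∃ C : ℝ, 0 ≤ C ∧ ∀ (e1 e2 : E), ∀ φ : E → ℂ, CC φ →
      ∫ x, ‖Cv cz (tt e1 e2) φ x‖ ^ q ∂μ ≤ C * ∫ x, ‖Cv czb (tt e1 e2) φ x‖ ^ q ∂μ := by
  obtain ⟨C0, hC0, h0⟩ := bilin μ q r hqr
  set C := C0 + 1 with hCdef
  have hC : 0 < C := by positivity
  have hq := hqr.lt
  have hr := hqr.symm.lt
  set lam : ℝ := (1 / (2 * C)) ^ (1 / (r - 1)) with hlam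
  have hl0 : 0 < lam := by positivity
  have hl1 : C * lam ^ r = lam / 2 := by
    have : lam ^ (r - 1) = 1 / (2 * C) := by
      rw [hlam, ← Real.rpow_mul (by positivity), one_div_mul_cancel (by linarith), Real.rpow_one]
    have h2 : lam ^ r = lam ^ (r - 1) * lam := by
      conv_lhs => rw [show r = (r - 1) + 1 by ring, Real.rpow_add hl0, Real.rpow_one]
    rw [h2, this]; field_simp
  refine ⟨2 * C / lam, by positivity, fun e1 e2 φ hφ => ?_⟩
  have hu := hφ.cv cz (tt e1 e2)
  set u := Cv cz (tt e1 e2) φ with hudef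
  have hG : CC (fun x => (lam : ℂ) * (conj (u x) * ((‖u x‖ ^ (q - 2) : ℝ) : ℂ))) :=
    (hu.comp0 _ (dual_cont q hq) (by simp)).const_mul _
  have h1 := h0 e1 e2 φ _ hφ hG
  have e1' : ∀ x, u x * ((lam : ℂ) * (conj (u x) * ((‖u x‖ ^ (q - 2) : ℝ) : ℂ))) = ((lam * ‖u x‖ ^ q : ℝ) : ℂ) := by
    intro x
    rw [mul_left_comm, dual_mul q hq]; push_cast; rfl
  have e2' : ∀ x, ‖(lam : ℂ) * (conj (u x) * ((‖u x‖ ^ (q - 2) : ℝ) : ℂ))‖ ^ r = lam ^ r * ‖u x‖ ^ q := by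
    intro x
    rw [norm_mul, dual_norm q hq, Complex.norm_real, Real.norm_eq_abs, abs_of_pos hl0,
      Real.mul_rpow hl0.le (by positivity), ← Real.rpow_mul (norm_nonneg _)]
    congr 2
    have := hqr.mul_eq_add
    linarith
  rw [← hudef] at h1
  simp_rw [e1', e2'] at h1
  rw [integral_complex_ofReal, Complex.norm_real, integral_const_mul, integral_const_mul] at h1
  set U := ∫ x, ‖u x‖ ^ q ∂μ with hU
  set X := ∫ x, ‖Cv czb (tt e1 e2) φ x‖ ^ q ∂μ with hX
  have hU0 : 0 ≤ U := integral_nonneg fun x => by positivity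
  have hX0 : 0 ≤ X := integral_nonneg fun x => by positivity
  rw [Real.norm_eq_abs, abs_of_nonneg (by positivity)] at h1
  have h2 : lam * U ≤ C * (X + lam ^ r * U) :=
    h1.trans (mul_le_mul_of_nonneg_right (by linarith) (by positivity))
  have h3 : lam * U ≤ C * X + lam / 2 * U := by
    calc _ ≤ _ := h2
      _ = C * X + (C * lam ^ r) * U := by ring
      _ = _ := by rw [hl1]
  rw [div_mul_eq_mul_div, le_div_iff₀ hl0]
  linarith

end discrete

section limit

variable {N : ℕ}

lemma IsTest.cc {φ : RN N → ℂ} (h : IsTest φ) : CC φ := ⟨h.1.continuous, h.2⟩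

lemma IsTest.diff {φ : RN N → ℂ} (h : IsTest φ) : Differentiable ℝ φ :=
  h.1.differentiable (by simp)

lemma IsTest.lip {φ : RN N → ℂ} (h : IsTest φ) : ∃ K : ℝ, 0 ≤ K ∧ ∀ x y, ‖φ x - φ y‖ ≤ K * ‖x - y‖ := by
  obtain ⟨C, hC⟩ := ContDiff.lipschitzWith_of_hasCompactSupport (𝕂 := ℝ) h.2 h.1 (by simp)
  exact ⟨C, C.2, fun x y => by simpa [dist_eq_norm] using hC.dist_le_mul x y⟩

lemma dd_lim {φ : RN N → ℂ} (h : IsTest φ) (X x : RN N) :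
    Filter.Tendsto (fun n : ℕ => (((n : ℂ) + 1) / 2) * Dd ((1 / ((n : ℝ) + 1)) • X) φ x) Filter.atTop
      (nhds (fderiv ℝ φ x X)) := by
  have hd : HasDerivAt (fun t : ℝ => φ (x + t • X)) (fderiv ℝ φ x X) 0 := by
    have h1 : HasFDerivAt φ (fderiv ℝ φ x) (x + (0 : ℝ) • X) := by
      simpa using (h.diff x).hasFDerivAt
    have h2 : HasDerivAt (fun t : ℝ => x + t • X) X 0 := by
      simpa using ((hasDerivAt_id (0 : ℝ)).smul_const X).const_add x
    exact h1.comp_hasDerivAt 0 h2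
  have h0 : Filter.Tendsto (fun n : ℕ => 1 / ((n : ℝ) + 1)) Filter.atTop (nhdsWithin 0 {0}ᶜ) := by
    rw [tendsto_nhdsWithin_iff]
    exact ⟨tendsto_one_div_add_atTop_nhds_zero_nat, Filter.Eventually.of_forall fun n => by
      have : (0 : ℝ) < 1 / ((n : ℝ) + 1) := by positivity
      simpa using this.ne'⟩
  have h0' : Filter.Tendsto (fun n : ℕ => -(1 / ((n : ℝ) + 1))) Filter.atTop (nhdsWithin 0 {0}ᶜ) := by
    rw [tendsto_nhdsWithin_iff] at h0 ⊢
    refine ⟨by simpa using h0.1.neg, h0.2.mono fun n hn => by simpa using hn⟩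
  have t1 := (hasDerivAt_iff_tendsto_slope_zero.1 hd).comp h0
  have t2 := (hasDerivAt_iff_tendsto_slope_zero.1 hd).comp h0'
  have t3 := (t1.add t2).const_mul (1 / 2 : ℂ)
  have e : (1 / 2 : ℂ) * (fderiv ℝ φ x X + fderiv ℝ φ x X) = fderiv ℝ φ x X := by ring
  rw [e] at t3
  refine t3.congr fun n => ?_
  have : ((n : ℂ) + 1) ≠ 0 := by exact_mod_cast Nat.succ_ne_zero n
  simp [Dd, sub_eq_add_neg]
  ring

lemma lim_int {φ : RN N → ℂ} (h : IsTest φ) (X Y : RN N) (ε : ℂ) (hε : ‖ε‖ = 1) (q : ℝ) (hq : 0 < q) :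
    Filter.Tendsto (fun n : ℕ => ∫ x, ‖(((n : ℂ) + 1) / 2) * (Dd ((1 / ((n : ℝ) + 1)) • X) φ x +
        ε * Dd ((1 / ((n : ℝ) + 1)) • Y) φ x)‖ ^ q) Filter.atTop
      (nhds (∫ x, ‖fderiv ℝ φ x X + ε * fderiv ℝ φ x Y‖ ^ q)) := by
  obtain ⟨K, hK0, hK⟩ := h.lip
  obtain ⟨R, hR⟩ := h.2.isBounded.subset_closedBall (0 : RN N)
  have hR' : ∀ x, R < ‖x‖ → φ x = 0 := fun x hx => by
    by_contra hne
    have := hR (subset_tsupport φ hne)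
    simp at this; linarith
  set R' := R + ‖X‖ + ‖Y‖
  have hle1 : ∀ n : ℕ, 1 / ((n : ℝ) + 1) ≤ 1 := fun n => by
    rw [div_le_one (by positivity)]; linarith [(Nat.cast_nonneg n : (0 : ℝ) ≤ n)]
  have hb : ∀ (n : ℕ) (Z : RN N) (x : RN N), ‖(((n : ℂ) + 1) / 2) * Dd ((1 / ((n : ℝ) + 1)) • Z) φ x‖ ≤ K * ‖Z‖ := by
    intro n Z x
    have h1 := hK (x + (1 / ((n : ℝ) + 1)) • Z) (x - (1 / ((n : ℝ) + 1)) • Z)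
    have h2 : x + (1 / ((n : ℝ) + 1)) • Z - (x - (1 / ((n : ℝ) + 1)) • Z) = (2 / ((n : ℝ) + 1)) • Z := by
      rw [show (2 / ((n : ℝ) + 1)) = 1 / ((n : ℝ) + 1) + 1 / ((n : ℝ) + 1) by ring, add_smul]; abel
    rw [h2, norm_smul, Real.norm_eq_abs, abs_of_nonneg (by positivity)] at h1
    have h3 : ‖(((n : ℂ) + 1) / 2)‖ = ((n : ℝ) + 1) / 2 := by
      have : (((n : ℂ) + 1) / 2) = ((((n : ℝ) + 1) / 2 : ℝ) : ℂ) := by push_cast; rfl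
      rw [this, Complex.norm_real, Real.norm_eq_abs, abs_of_nonneg (by positivity)]
    rw [norm_mul, h3]
    calc _ ≤ ((n : ℝ) + 1) / 2 * (K * (2 / ((n : ℝ) + 1) * ‖Z‖)) := mul_le_mul_of_nonneg_left h1 (by positivity)
      _ = K * ‖Z‖ := by field_simp
  have hz : ∀ (n : ℕ) (Z : RN N) (x : RN N), R + ‖Z‖ < ‖x‖ → Dd ((1 / ((n : ℝ) + 1)) • Z) φ x = 0 := by
    intro n Z x hx
    have h1 : ‖(1 / ((n : ℝ) + 1)) • Z‖ ≤ ‖Z‖ := by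
      rw [norm_smul, Real.norm_eq_abs, abs_of_nonneg (by positivity)]
      exact mul_le_of_le_one_left (norm_nonneg _) (hle1 n)
    rw [Dd, hR' _ ?_, hR' _ ?_, sub_zero]
    · have := norm_sub_norm_le x ((1 / ((n : ℝ) + 1)) • Z); linarith
    · have := norm_sub_le (x + (1 / ((n : ℝ) + 1)) • Z) ((1 / ((n : ℝ) + 1)) • Z)
      rw [add_sub_cancel_right] at this; linarith
  refine tendsto_integral_of_dominated_convergence
    ((Metric.closedBall (0 : RN N) R').indicator (fun _ => (K * ‖X‖ + K * ‖Y‖) ^ q)) ?_ ?_ ?_ ?_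
  · intro n
    have c := ((h.cc.dd ((1 / ((n : ℝ) + 1)) • X)).add ((h.cc.dd ((1 / ((n : ℝ) + 1)) • Y)).const_mul ε)).const_mul (((n : ℂ) + 1) / 2)
    exact (c.norm.rpow hq).1.aestronglyMeasurable
  · rw [integrable_indicator_iff measurableSet_closedBall]
    exact integrableOn_const (measure_closedBall_lt_top.ne)
  · intro n
    refine Filter.Eventually.of_forall fun x => ?_
    rw [Real.norm_eq_abs, abs_of_nonneg (by positivity)]
    by_cases hx : x ∈ Metric.closedBall (0 : RN N) R'
    · rw [Set.indicator_of_mem hx]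
      refine Real.rpow_le_rpow (norm_nonneg _) ?_ hq.le
      rw [mul_add]
      refine (norm_add_le _ _).trans (add_le_add (hb n X x) ?_)
      rw [mul_left_comm, norm_mul, hε, one_mul]
      exact hb n Y x
    · rw [Set.indicator_of_notMem hx]
      simp only [Metric.mem_closedBall, dist_zero_right, not_le, R'] at hx
      rw [hz n X x (by linarith [norm_nonneg Y]), hz n Y x (by linarith [norm_nonneg X])]
      simp [Real.zero_rpow hq.ne']
  · refine Filter.Eventually.of_forall fun x => ?_
    have t := (dd_lim h X x).add ((dd_lim h Y x).const_mul ε)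
    have t2 := t.norm.rpow_const (p := q) (Or.inr hq.le)
    refine t2.congr fun n => ?_
    congr 2; ring

lemma cont_ineq (N : ℕ) (q r : ℝ) (hqr : q.HolderConjugate r) :
    ∃ C : ℝ, 0 ≤ C ∧ ∀ (X Y : RN N) (φ : RN N → ℂ), IsTest φ →
      ∫ x, ‖fderiv ℝ φ x X - Complex.I * fderiv ℝ φ x Y‖ ^ q ≤
        C * ∫ x, ‖fderiv ℝ φ x X + Complex.I * fderiv ℝ φ x Y‖ ^ q := by
  obtain ⟨C, hC, h⟩ := disc (volume : Measure (RN N)) q r hqr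
  refine ⟨C, hC, fun X Y φ hφ => ?_⟩
  have t1 := lim_int hφ X Y (-Complex.I) (by simp) q hqr.pos
  have t2 := (lim_int hφ X Y Complex.I (by simp) q hqr.pos).const_mul C
  have := le_of_tendsto_of_tendsto' t1 t2 (fun n => by
    have := h ((1 / ((n : ℝ) + 1)) • X) ((1 / ((n : ℝ) + 1)) • Y) (fun x => (((n : ℂ) + 1) / 2) * φ x) (hφ.cc.const_mul _)
    simp_rw [cvz_eq, cvzb_eq] at this
    have e : ∀ (c : ℂ) (v x : RN N), Dd v (fun x => c * φ x) x = c * Dd v φ x := fun c v x => by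
      simp [Dd, mul_sub]
    simp_rw [e] at this
    have e2 : ∀ c u v : ℂ, c * u - Complex.I * (c * v) = c * (u + -Complex.I * v) := fun c u v => by ring
    have e3 : ∀ c u v : ℂ, c * u + Complex.I * (c * v) = c * (u + Complex.I * v) := fun c u v => by ring
    simp_rw [e2, e3] at this
    exact this)
  simpa [sub_eq_add_neg] using this

/-- real and imaginary parts of coefficients -/
def reV (c : Fin N → ℂ) : RN N := WithLp.toLp 2 (fun i => (c i).re)
def imV (c : Fin N → ℂ) : RN N := WithLp.toLp 2 (fun i => (c i).im)

lemma fderiv_expand (f : RN N → ℂ) (x v : RN N) : fderiv ℝ f x v = ∑ i, (v i : ℂ) * pd i f x := by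
  have : v = ∑ i, v i • EuclideanSpace.single i (1 : ℝ) := by
    ext j; simp [Finset.sum_apply, Pi.single_apply]
  conv_lhs => rw [this]
  rw [map_sum]
  refine Finset.sum_congr rfl fun i _ => ?_
  rw [map_smul, Complex.real_smul, pd]

lemma vf_eq (c : Fin N → ℂ) (f : RN N → ℂ) (x : RN N) :
    vf c f x = fderiv ℝ f x (reV c) + Complex.I * fderiv ℝ f x (imV c) := by
  rw [fderiv_expand, fderiv_expand, vf, Finset.mul_sum, ← Finset.sum_add_distrib]
  refine Finset.sum_congr rfl fun i _ => ?_
  simp only [reV, imV]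
  conv_lhs => rw [← Complex.re_add_im (c i)]
  ring

lemma vf_conj_eq (c : Fin N → ℂ) (f : RN N → ℂ) (x : RN N) :
    vf (fun i => conj (c i)) f x = fderiv ℝ f x (reV c) - Complex.I * fderiv ℝ f x (imV c) := by
  rw [vf_eq]
  have h1 : reV (fun i => conj (c i)) = reV c := by ext i; simp [reV]
  have h2 : imV (fun i => conj (c i)) = - imV c := by ext i; simp [imV]
  rw [h1, h2, map_neg]; ring

lemma vf_ineq (N : ℕ) (q r : ℝ) (hqr : q.HolderConjugate r) :
    ∃ C : ℝ, 0 ≤ C ∧ ∀ (c : Fin N → ℂ) (φ : RN N → ℂ), IsTest φ →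
      ∫ x, ‖vf (fun i => conj (c i)) φ x‖ ^ q ≤ C * ∫ x, ‖vf c φ x‖ ^ q := by
  obtain ⟨C, hC, h⟩ := cont_ineq N q r hqr
  refine ⟨C, hC, fun c φ hφ => ?_⟩
  simp_rw [vf_conj_eq, vf_eq]
  exact h _ _ φ hφ

lemma pd_conj (i : Fin N) (f : RN N → ℂ) (x : RN N) :
    pd i (fun y => conj (f y)) x = conj (pd i f x) := by
  have h : (fun y => conj (f y)) = (Complex.conjCLE : ℂ → ℂ) ∘ f := rfl
  rw [pd, h, ContinuousLinearEquiv.comp_fderiv]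
  rfl

lemma vf_conj_fun (c : Fin N → ℂ) (f : RN N → ℂ) (x : RN N) :
    vf c (fun y => conj (f y)) x = conj (vf (fun i => conj (c i)) f x) := by
  simp [vf, pd_conj, map_sum]

end limit

section calculus

variable {N : ℕ}

lemma pd_smooth (i : Fin N) {f : RN N → ℂ} (hf : ContDiff ℝ (⊤ : ℕ∞) f) :
    ContDiff ℝ (⊤ : ℕ∞) (pd i f) :=
  (hf.fderiv_right (m := (⊤ : ℕ∞)) (by simp)).clm_apply contDiff_const

lemma vf_smooth (c : Fin N → ℂ) {f : RN N → ℂ} (hf : ContDiff ℝ (⊤ : ℕ∞) f) :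
    ContDiff ℝ (⊤ : ℕ∞) (vf c f) :=
  ContDiff.sum fun i _ => contDiff_const.mul (pd_smooth i hf)

lemma smooth_diff {f : RN N → ℂ} (hf : ContDiff ℝ (⊤ : ℕ∞) f) : Differentiable ℝ f :=
  hf.differentiable (by simp)

lemma pd_add (i : Fin N) {f g : RN N → ℂ} (hf : ContDiff ℝ (⊤ : ℕ∞) f) (hg : ContDiff ℝ (⊤ : ℕ∞) g) (x : RN N) :
    pd i (fun y => f y + g y) x = pd i f x + pd i g x := by
  simp only [pd]
  rw [fderiv_fun_add (smooth_diff hf x) (smooth_diff hg x)]; rfl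

lemma pd_const_mul (i : Fin N) (c : ℂ) {f : RN N → ℂ} (hf : ContDiff ℝ (⊤ : ℕ∞) f) (x : RN N) :
    pd i (fun y => c * f y) x = c * pd i f x := by
  simp only [pd]
  rw [fderiv_const_mul (smooth_diff hf x)]; rfl

lemma pd_sum (i : Fin N) {ι : Type} (s : Finset ι) {f : ι → RN N → ℂ} (hf : ∀ k, ContDiff ℝ (⊤ : ℕ∞) (f k)) (x : RN N) :
    pd i (fun y => ∑ k ∈ s, f k y) x = ∑ k ∈ s, pd i (f k) x := by
  simp only [pd]
  rw [fderiv_fun_sum (fun k _ => smooth_diff (hf k) x)]; simp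

lemma vf_add (c : Fin N → ℂ) {f g : RN N → ℂ} (hf : ContDiff ℝ (⊤ : ℕ∞) f) (hg : ContDiff ℝ (⊤ : ℕ∞) g) (x : RN N) :
    vf c (fun y => f y + g y) x = vf c f x + vf c g x := by
  simp only [vf, pd_add _ hf hg, mul_add, Finset.sum_add_distrib]

lemma vf_const_mul (c : Fin N → ℂ) (d : ℂ) {f : RN N → ℂ} (hf : ContDiff ℝ (⊤ : ℕ∞) f) (x : RN N) :
    vf c (fun y => d * f y) x = d * vf c f x := by
  simp only [vf, pd_const_mul _ d hf, Finset.mul_sum]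
  exact Finset.sum_congr rfl fun i _ => by ring

lemma vf_zero (c : Fin N → ℂ) (x : RN N) : vf c (fun _ => 0) x = 0 := by
  simp [vf, pd]

lemma pd_comm (i j : Fin N) {f : RN N → ℂ} (hf : ContDiff ℝ (⊤ : ℕ∞) f) (x : RN N) :
    pd i (pd j f) x = pd j (pd i f) x := by
  have hd : DifferentiableAt ℝ (fderiv ℝ f) x :=
    ((hf.fderiv_right (m := (⊤ : ℕ∞)) (by simp)).differentiable (by simp)) x
  have h : ∀ k l : Fin N, pd k (pd l f) x =
      fderiv ℝ (fderiv ℝ f) x (EuclideanSpace.single k 1) (EuclideanSpace.single l 1) := by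
    intro k l
    have e : pd l f = fun y => fderiv ℝ f y (EuclideanSpace.single l 1) := rfl
    rw [pd, e, fderiv_clm_apply hd (differentiableAt_const _)]
    simp
  rw [h, h]
  have hs : IsSymmSndFDerivAt ℝ f x := by
    apply ContDiffAt.isSymmSndFDerivAt (n := (⊤ : ℕ∞)) hf.contDiffAt
    simp only [minSmoothness_of_isRCLikeNormedField]
    exact WithTop.coe_le_coe.2 (le_top : (2 : ℕ∞) ≤ ⊤)
  exact hs.eq _ _

lemma vf_comm (c d : Fin N → ℂ) {f : RN N → ℂ} (hf : ContDiff ℝ (⊤ : ℕ∞) f) (x : RN N) :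
    vf c (vf d f) x = vf d (vf c f) x := by
  have h : ∀ c d : Fin N → ℂ, vf c (vf d f) x = ∑ i, ∑ j, c i * (d j * pd i (pd j f) x) := by
    intro c d
    have e : vf d f = fun y => ∑ j, d j * pd j f y := rfl
    rw [vf, e]
    refine Finset.sum_congr rfl fun i _ => ?_
    rw [pd_sum i _ (fun k => contDiff_const.mul (pd_smooth k hf)), Finset.mul_sum]
    refine Finset.sum_congr rfl fun j _ => ?_
    rw [pd_const_mul i _ (pd_smooth j hf)]
  rw [h, h, Finset.sum_comm]
  refine Finset.sum_congr rfl fun i _ => Finset.sum_congr rfl fun j _ => ?_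
  rw [pd_comm j i hf]; ring

lemma vf_tsupport (c : Fin N → ℂ) (f : RN N → ℂ) : tsupport (vf c f) ⊆ tsupport f := by
  refine closure_minimal (fun x hx => ?_) isClosed_closure
  by_contra hn
  apply hx
  have : fderiv ℝ f x = 0 := by
    by_contra h
    exact hn (support_fderiv_subset ℝ h)
  simp [vf, pd, this]

lemma vf_test (c : Fin N → ℂ) {f : RN N → ℂ} (hf : IsTest f) : IsTest (vf c f) :=
  ⟨vf_smooth c hf.1, hf.2.of_isClosed_subset (isClosed_tsupport _) (vf_tsupport c f)⟩

lemma exists_k (ρ ρ' : ℝ) (h0 : 0 < ρ) (h1 : ρ < ρ') : ∃ k k' : ℝ → ℝ, ContDiff ℝ (⊤ : ℕ∞) k ∧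
    (∀ x, HasDerivAt k (k' x) x) ∧ (∀ x, |k x| ≤ |x|) ∧ (∀ x, |k' x| ≤ 1) ∧
    (∀ x, |x| ≤ ρ → k' x = 1) ∧ (∀ x, ρ' ≤ |x| → k' x = 0) := by
  let b : ContDiffBump (0 : ℝ) := ⟨ρ, ρ', h0, h1⟩
  have hb : Continuous b := b.continuous
  have hd : ∀ x, HasDerivAt (fun x => ∫ t in (0 : ℝ)..x, b t) (b x) x := fun x =>
    intervalIntegral.integral_hasDerivAt_right (hb.intervalIntegrable _ _)
      (hb.stronglyMeasurableAtFilter _ _) hb.continuousAt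
  refine ⟨fun x => ∫ t in (0 : ℝ)..x, b t, b, ?_, hd, ?_, ?_, ?_, ?_⟩
  · rw [contDiff_infty_iff_deriv]
    refine ⟨fun x => (hd x).differentiableAt, ?_⟩
    have : deriv (fun x => ∫ t in (0 : ℝ)..x, b t) = b := funext fun x => (hd x).deriv
    rw [this]; exact b.contDiff
  · intro x
    have := intervalIntegral.norm_integral_le_of_norm_le_const (a := 0) (b := x) (f := b) (C := 1)
      (fun t _ => by rw [Real.norm_eq_abs, abs_of_nonneg b.nonneg]; exact b.le_one)
    simpa using this
  · intro x; rw [abs_of_nonneg b.nonneg]; exact b.le_one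
  · intro x hx; exact b.one_of_mem_closedBall (by simpa [b] using hx)
  · intro x hx; exact b.zero_of_le_dist (by simpa [b] using hx)

lemma vLp_eq {n : ℕ} {V : Fin n → RN N → ℂ} (p : ℝ≥0∞) :
    vLpNorm V p = eLpNorm (fun x => √(∑ j, ‖V j x‖ ^ 2)) p volume := by
  rw [vLpNorm, ← eLpNorm_norm]
  congr 1; funext x
  rw [EuclideanSpace.norm_eq]; rfl

lemma mLp_eq {n : ℕ} {A : Fin n → Fin n → RN N → ℂ} (p : ℝ≥0∞) :
    mLpNorm A p = eLpNorm (fun x => √(∑ ij : Fin n × Fin n, ‖A ij.1 ij.2 x‖ ^ 2)) p volume := by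
  rw [mLpNorm, ← eLpNorm_norm]
  congr 1; funext x
  rw [EuclideanSpace.norm_eq]; rfl

lemma CC.sqrt_sum {ι : Type} [Fintype ι] {V : ι → RN N → ℂ} (h : ∀ j, CC (V j)) :
    CC (fun x => √(∑ j, ‖V j x‖ ^ 2)) := by
  have h1 : ∀ j, CC (fun x => ‖V j x‖ ^ 2) := fun j => by
    simpa only [sq] using (h j).norm.mul (h j).norm
  exact (CC.sum Finset.univ h1).comp0 _ Real.continuous_sqrt Real.sqrt_zero

lemma CC.eLp {F : Type*} [NormedAddCommGroup F] {f : RN N → F} (h : CC f) (p : ℝ≥0∞) (h0 : p ≠ 0) (ht : p ≠ ⊤) :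
    eLpNorm f p volume = ENNReal.ofReal ((∫ x, ‖f x‖ ^ p.toReal) ^ (p.toReal)⁻¹) :=
  (h.1.memLp_of_hasCompactSupport h.2).eLpNorm_eq_integral_rpow_norm h0 ht

lemma conj_exp {p p' : ℝ≥0∞} (hp : 1 < p) (hptop : p ≠ ⊤) (hpp' : 1 / p + 1 / p' = 1) :
    p' ≠ 0 ∧ p' ≠ ⊤ ∧ (p'.toReal).HolderConjugate p.toReal := by
  have h0 : p' ≠ 0 := by
    rintro rfl; simp at hpp'
  have ht : p' ≠ ⊤ := by
    rintro rfl; simp at hpp'; simp [hpp'] at hp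
  refine ⟨h0, ht, ?_⟩
  have hp0 : p ≠ 0 := (zero_lt_one.trans hp).ne'
  have h1 : 1 / p.toReal + 1 / p'.toReal = 1 := by
    have := congrArg ENNReal.toReal hpp'
    rw [ENNReal.toReal_add (by simp [hp0]) (by simp [h0])] at this
    simpa using this
  have hpr : 1 < p.toReal := by
    have := (ENNReal.toReal_lt_toReal ENNReal.one_ne_top hptop).2 hp
    simpa using this
  have : p.toReal.HolderConjugate p'.toReal := by
    rw [Real.holderConjugate_iff]
    exact ⟨hpr, by simpa using h1⟩
  exact this.symm

/-- bounded functions supported in a ball -/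
lemma eLp_bound (f : RN N → ℝ) (p : ℝ≥0∞) (B : ℝ) (hB : ∀ x, |f x| ≤ B) (hs : ∀ x, x ∉ ball (0 : RN N) 2 → f x = 0) :
    eLpNorm f p volume ≤ (volume (ball (0 : RN N) 2)) ^ p.toReal⁻¹ * ENNReal.ofReal B := by
  rw [← eLpNorm_restrict_eq_of_support_subset (s := ball (0 : RN N) 2) (fun x hx => by
    by_contra hn; exact hx (hs x hn))]
  refine (eLpNorm_le_of_ae_bound (C := B) (Filter.Eventually.of_forall fun x => hB x)).trans ?_
  simp

end calculus

section construction

lemma sqrt_sum_le {ι : Type} [Fintype ι] (a : ι → ℝ) (ha : ∀ i, 0 ≤ a i) : √(∑ i, a i ^ 2) ≤ ∑ i, a i := by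
  rw [Real.sqrt_le_left (Finset.sum_nonneg fun i _ => ha i)]
  exact Finset.sum_sq_le_sq_sum_of_nonneg fun i _ => ha i

lemma fderiv_ofReal {N : ℕ} {f : RN N → ℝ} (hf : Differentiable ℝ f) (x v : RN N) :
    fderiv ℝ (fun y => ((f y : ℝ) : ℂ)) x v = ((fderiv ℝ f x v : ℝ) : ℂ) := by
  have h : (fun y => ((f y : ℝ) : ℂ)) = Complex.ofRealCLM ∘ f := rfl
  rw [h, fderiv_comp x Complex.ofRealCLM.differentiableAt (hf x)]
  simp

lemma g_ne {N : ℕ} (c : Fin N → ℂ) (I0 : Fin N) (hc : c I0 = 1) (z : RN N) (b : ContDiffBump z) :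
    ∃ x, vf c (fun y => ((b y : ℝ) : ℂ)) x ≠ 0 := by
  by_contra hcon
  push Not at hcon
  have hd : Differentiable ℝ b := (b.contDiff (n := 1)).differentiable (by simp)
  have h1 : ∀ x, fderiv ℝ b x (reV c) = 0 := by
    intro x
    have := hcon x
    rw [vf_eq, fderiv_ofReal hd, fderiv_ofReal hd] at this
    have := congrArg Complex.re this
    simpa using this
  have h2 : ∀ t : ℝ, HasDerivAt (fun t : ℝ => b (z + t • reV c)) 0 t := by
    intro t
    have h2 : HasDerivAt (fun t : ℝ => z + t • reV c) (reV c) t := by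
      simpa using ((hasDerivAt_id t).smul_const (reV c)).const_add z
    have := (hd (z + t • reV c)).hasFDerivAt.comp_hasDerivAt t h2
    rwa [h1] at this
  have h3 := is_const_of_deriv_eq_zero (fun t => (h2 t).differentiableAt) (fun t => (h2 t).deriv)
    0 b.rOut
  have h4 : b (z + (0 : ℝ) • reV c) = 1 := by
    simpa using b.one_of_mem_closedBall (by simp [b.rIn_pos.le])
  have h5 : b (z + b.rOut • reV c) = 0 := by
    apply b.zero_of_le_dist
    have : 1 ≤ ‖reV c‖ := by
      have := PiLp.norm_apply_le (reV c) I0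
      simpa [reV, hc] using this
    simp only [dist_eq_norm, add_sub_cancel_left, norm_smul, Real.norm_eq_abs, abs_of_pos b.rOut_pos]
    nlinarith [b.rOut_pos]
  rw [h4, h5] at h3
  norm_num at h3

lemma h_pd {N : ℕ} (I0 : Fin N) {k k' : ℝ → ℝ} (hk : ∀ x, HasDerivAt k (k' x) x) {η : RN N → ℝ}
    (hη : Differentiable ℝ η) (i : Fin N) (x : RN N) :
    pd i (fun y => ((k (y I0) * η y : ℝ) : ℂ)) x =
      ((k' (x I0) * (if i = I0 then 1 else 0) * η x + k (x I0) * fderiv ℝ η x (EuclideanSpace.single i 1) : ℝ) : ℂ) := by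
  have h0 : HasFDerivAt (fun y : RN N => y I0) (EuclideanSpace.proj I0 : RN N →L[ℝ] ℝ) x :=
    (EuclideanSpace.proj I0 : RN N →L[ℝ] ℝ).hasFDerivAt
  have h1 : ∀ x : RN N, HasFDerivAt (fun y : RN N => k (y I0)) (k' (x I0) • (EuclideanSpace.proj I0 : RN N →L[ℝ] ℝ)) x := fun x =>
    (hk (x I0)).comp_hasFDerivAt x (EuclideanSpace.proj I0 : RN N →L[ℝ] ℝ).hasFDerivAt
  have hd : Differentiable ℝ (fun y : RN N => k (y I0) * η y) := fun x => (h1 x).differentiableAt.mul (hη x)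
  have hm : HasFDerivAt (fun y : RN N => k (y I0) * η y) _ x := (h1 x).mul (hη x).hasFDerivAt
  rw [pd, fderiv_ofReal hd, hm.fderiv]
  congr 1
  simp [Pi.single_apply, eq_comm]
  ring

lemma nc_same {n m : ℕ} (a : Fin n → Fin m → ℂ) (j : Fin n) : normCoeff a j (Fin.castAdd m j) = 1 := by
  simp [normCoeff]

lemma nc_diff {n m : ℕ} (a : Fin n → Fin m → ℂ) (j i : Fin n) (h : i ≠ j) : normCoeff a j (Fin.castAdd m i) = 0 := by
  simp [normCoeff, h]

lemma exists_V (n m : ℕ) (a : Fin n → Fin m → ℂ) (i0 i1 : Fin n) (hne : i0 ≠ i1) (p : ℝ≥0∞)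
    (M : ℝ) (hM : 0 ≤ M) :
    ∃ C₂ : ℝ≥0, 0 < C₂ ∧ ∀ ρ ρ' : ℝ, 0 < ρ → ρ < ρ' → ∃ V : Fin n → RN (n + m) → ℂ,
      (∀ k, ContDiff ℝ (⊤ : ℕ∞) (V k)) ∧ (∀ k, tsupport (V k) ⊆ ball 0 2) ∧
      (∀ x, ∑ k, vfStar (normCoeff a k) (V k) x = 0) ∧ vLpNorm V p ≤ C₂ ∧
      (∀ x, ‖x‖ < 1 → ‖x‖ ≤ ρ → ∀ j, V j x = if j = i1 then (M : ℂ) else 0) ∧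
      (∀ x : RN (n + m), ‖x‖ < 1 → ρ' ≤ |x (Fin.castAdd m i0)| → ∀ j, V j x = 0) := by
  let η : ContDiffBump (0 : RN (n + m)) := ⟨1, 3 / 2, by norm_num, by norm_num⟩
  have hη : ContDiff ℝ (⊤ : ℕ∞) η := η.contDiff
  have hηd : Differentiable ℝ η := hη.differentiable (by simp)
  obtain ⟨K, hK⟩ := ContDiff.lipschitzWith_of_hasCompactSupport (𝕂 := ℝ) η.hasCompactSupport hη (by simp)
  have hKb : ∀ x i, |fderiv ℝ η x (EuclideanSpace.single i 1)| ≤ K := by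
    intro x i
    have := (fderiv ℝ η x).le_opNorm (EuclideanSpace.single i 1)
    have h2 := norm_fderiv_le_of_lipschitz ℝ hK (x₀ := x)
    simp at this
    exact this.trans h2
  set c0 := fun i => conj (normCoeff a i0 i) with hc0
  set c1 := fun i => conj (normCoeff a i1 i) with hc1
  set S := (∑ i, ‖c0 i‖) * (1 + 2 * K) + (∑ i, ‖c1 i‖) * (1 + 2 * K) with hS
  set B := n * (M * S) with hB
  set I0 := Fin.castAdd m i0
  set T := (volume (ball (0 : RN (n + m)) 2)) ^ p.toReal⁻¹ * ENNReal.ofReal B with hT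
  have hTt : T ≠ ⊤ := ENNReal.mul_ne_top (ENNReal.rpow_ne_top_of_nonneg (by positivity) measure_ball_lt_top.ne) ENNReal.ofReal_ne_top
  refine ⟨T.toNNReal + 1, by positivity, fun ρ ρ' hρ hρ' => ?_⟩
  obtain ⟨k, k', hk, hkd, hkb, hkb', hk1, hk0⟩ := exists_k ρ ρ' hρ hρ'
  set h : RN (n + m) → ℂ := fun y => ((k (y I0) * η y : ℝ) : ℂ) with hh
  have hsm : ContDiff ℝ (⊤ : ℕ∞) h :=
    Complex.ofRealCLM.contDiff.comp ((hk.comp (EuclideanSpace.proj I0 : RN (n + m) →L[ℝ] ℝ).contDiff).mul hη)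
  have hts : tsupport h ⊆ closedBall 0 (3 / 2) := by
    have : tsupport h ⊆ tsupport η := closure_mono (fun x hx => by
      intro h0; apply hx; simp [hh, h0])
    rw [η.tsupport_eq] at this
    exact this
  have hvz : ∀ (d : Fin (n + m) → ℂ) x, x ∉ closedBall (0 : RN (n + m)) (3 / 2) → vf d h x = 0 := by
    intro d x hx
    by_contra hn
    exact hx (hts (vf_tsupport d h (subset_tsupport _ hn)))
  have hpdb : ∀ x ∈ closedBall (0 : RN (n + m)) (3 / 2), ∀ i, ‖pd i h x‖ ≤ 1 + 2 * K := by
    intro x hx i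
    rw [h_pd I0 hkd hηd, Complex.norm_real, Real.norm_eq_abs]
    have x2 : |x I0| ≤ 2 := by
      have := PiLp.norm_apply_le x I0
      simp at hx this; linarith
    have b1 : |k' (x I0) * (if i = I0 then 1 else 0) * η x| ≤ 1 := by
      rw [abs_mul, abs_mul, abs_of_nonneg (η.nonneg' x)]
      have e1 : |(if i = I0 then 1 else 0 : ℝ)| ≤ 1 := by split_ifs <;> simp
      exact mul_le_one₀ (mul_le_one₀ (hkb' _) (abs_nonneg _) e1) (η.nonneg' x) η.le_one
    have b2 : |k (x I0) * fderiv ℝ η x (EuclideanSpace.single i 1)| ≤ 2 * K := by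
      rw [abs_mul]
      exact mul_le_mul ((hkb _).trans x2) (hKb x i) (abs_nonneg _) (by norm_num)
    exact (abs_add_le _ _).trans (add_le_add b1 b2)
  have hvb : ∀ (d : Fin (n + m) → ℂ) x, ‖vf d h x‖ ≤ (∑ i, ‖d i‖) * (1 + 2 * K) := by
    intro d x
    by_cases hx : x ∈ closedBall (0 : RN (n + m)) (3 / 2)
    · rw [vf, Finset.sum_mul]
      refine (norm_sum_le _ _).trans (Finset.sum_le_sum fun i _ => ?_)
      rw [norm_mul]
      exact mul_le_mul_of_nonneg_left (hpdb x hx i) (norm_nonneg _)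
    · rw [hvz d x hx, norm_zero]; positivity
  have hloc : ∀ (d : Fin (n + m) → ℂ) x, ‖x‖ < 1 → vf d h x = d I0 * (k' (x I0) : ℂ) := by
    intro d x hx
    have e1 : η x = 1 := η.one_of_mem_closedBall (by simpa [η] using hx.le)
    have e2 : fderiv ℝ η x = 0 := by
      have : (η : RN (n + m) → ℝ) =ᶠ[nhds x] fun _ => 1 := by
        filter_upwards [isOpen_ball.mem_nhds (show x ∈ ball (0 : RN (n + m)) 1 by simpa using hx)] with y hy
        exact η.one_of_mem_closedBall (ball_subset_closedBall hy)
      rw [this.fderiv_eq]; simp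
    rw [vf, Finset.sum_eq_single I0]
    · rw [h_pd I0 hkd hηd]; simp [e1, e2]
    · intro i _ hi
      rw [h_pd I0 hkd hηd]; simp [e2, hi]
    · simp
  have c00 : c0 I0 = 1 := by simp [hc0, I0, nc_same]
  have c10 : c1 I0 = 0 := by simp [hc1, I0, nc_diff a i1 i0 hne]
  refine ⟨fun j x => (M * (if j = i1 then 1 else 0) : ℂ) * vf c0 h x + (M * (if j = i0 then -1 else 0) : ℂ) * vf c1 h x,
    ?_, ?_, ?_, ?_, ?_, ?_⟩
  · intro j
    exact (contDiff_const.mul (vf_smooth _ hsm)).add (contDiff_const.mul (vf_smooth _ hsm))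
  · intro j
    refine (closure_minimal (fun x hx => ?_) isClosed_closedBall).trans (closedBall_subset_ball (by norm_num : (3 / 2 : ℝ) < 2))
    by_contra hn
    apply hx
    simp [hvz _ x hn]
  · intro x
    have : ∀ j, vfStar (normCoeff a j) (fun x => (M * (if j = i1 then 1 else 0) : ℂ) * vf c0 h x + (M * (if j = i0 then -1 else 0) : ℂ) * vf c1 h x) x
        = (if j = i1 then - M * vf (fun i => conj (normCoeff a j i)) (vf c0 h) x else 0) +
          (if j = i0 then M * vf (fun i => conj (normCoeff a j i)) (vf c1 h) x else 0) := by
      intro j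
      rw [vfStar, vf_add _ (contDiff_const.mul (vf_smooth _ hsm)) (contDiff_const.mul (vf_smooth _ hsm)),
        vf_const_mul _ _ (vf_smooth _ hsm), vf_const_mul _ _ (vf_smooth _ hsm)]
      split_ifs <;> ring
    simp_rw [this]
    rw [Finset.sum_add_distrib, Finset.sum_ite_eq', Finset.sum_ite_eq']
    simp only [Finset.mem_univ, if_true]
    rw [← hc0, ← hc1, vf_comm c1 c0 hsm]
    ring
  · rw [vLp_eq]
    refine (eLp_bound _ p B ?_ ?_).trans ?_
    · intro x
      rw [abs_of_nonneg (Real.sqrt_nonneg _)]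
      refine (sqrt_sum_le _ (fun _ => norm_nonneg _)).trans ?_
      have : ∀ j ∈ (Finset.univ : Finset (Fin n)), ‖(M * (if j = i1 then 1 else 0) : ℂ) * vf c0 h x + (M * (if j = i0 then -1 else 0) : ℂ) * vf c1 h x‖ ≤ M * S := by
        intro j _
        refine (norm_add_le _ _).trans ?_
        rw [hS, mul_add, norm_mul, norm_mul, norm_mul, norm_mul, Complex.norm_real, Real.norm_eq_abs, abs_of_nonneg hM]
        have e1 : ‖(if j = i1 then 1 else 0 : ℂ)‖ ≤ 1 := by split_ifs <;> simp
        have e2 : ‖(if j = i0 then -1 else 0 : ℂ)‖ ≤ 1 := by split_ifs <;> simp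
        refine add_le_add ?_ ?_
        · exact mul_le_mul (mul_le_of_le_one_right hM e1) (hvb _ _) (norm_nonneg _) hM
        · exact mul_le_mul (mul_le_of_le_one_right hM e2) (hvb _ _) (norm_nonneg _) hM
      refine (Finset.sum_le_sum this).trans ?_
      simp [hB]
    · intro x hx
      have : x ∉ closedBall (0 : RN (n + m)) (3 / 2) := fun h => hx (closedBall_subset_ball (by norm_num) h)
      simp [hvz _ x this]
    · rw [← hT, ENNReal.coe_add, ENNReal.coe_toNNReal hTt]
      exact le_self_add
  · intro x hx hxρ j
    have : k' (x I0) = 1 := hk1 _ ((PiLp.norm_apply_le x I0).trans hxρ)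
    simp only [hloc _ x hx, c00, c10, this]
    split_ifs <;> simp
  · intro x hx hxρ j
    simp [hloc _ x hx, hk0 _ hxρ]

end construction

section final

lemma ofReal_le_two_mul {x y : ℝ} (h : x ≤ 2 * y) : ENNReal.ofReal x ≤ 2 * ENNReal.ofReal y := by
  rw [show (2 : ℝ≥0∞) = ENNReal.ofReal 2 by simp, ← ENNReal.ofReal_mul (by norm_num)]
  exact ENNReal.ofReal_le_ofReal h

lemma CC.int_pos {N : ℕ} {f : RN N → ℝ} (h : CC f) (h0 : ∀ x, 0 ≤ f x) (x : RN N) (hx : f x ≠ 0) :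
    0 < ∫ x, f x :=
  h.1.integral_pos_of_hasCompactSupport_nonneg_nonzero h.2 h0 hx

set_option maxHeartbeats 1000000 in
lemma exists_W (n m : ℕ) (a : Fin n → Fin m → ℂ) (i0 i1 : Fin n) (q : ℝ) (hq : 0 < q)
    (M : ℝ) (hM : 1 ≤ M) (ρ ρ' : ℝ) (h0 : 0 < ρ) (h1 : ρ < ρ') (h2 : ρ' < 1)
    (φ : RN (n + m) → ℂ) (hφ : IsTest φ) (hs : tsupport φ ⊆ ball 0 ρ) :
    ∃ W : Fin n → RN (n + m) → ℂ,
      (∀ k, ContDiff ℝ (⊤ : ℕ∞) (W k)) ∧ (∀ k, tsupport (W k) ⊆ ball 0 1) ∧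
      (∀ x, (∀ j, W j x = if j = i1 then conj (φ x) / M else 0) ∨
        (ρ' ≤ |x (Fin.castAdd m i0)| ∧ φ x = 0 ∧ ‖x‖ < 1)) ∧
      (∫ x, √(∑ j, ‖W j x‖ ^ 2) ^ q = ∫ x, ‖φ x‖ ^ q) ∧
      (∀ i j x, vf (normCoeff a i) (W j) x - vf (normCoeff a j) (W i) x =
        (if j = i1 then 1 else 0) * (vf (normCoeff a i) (fun y => conj (φ y)) x / M) -
        (if i = i1 then 1 else 0) * (vf (normCoeff a j) (fun y => conj (φ y)) x / M)) := by
  set I0 := Fin.castAdd m i0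
  set z : RN (n + m) := EuclideanSpace.single I0 ((1 + ρ') / 2) with hz
  let b : ContDiffBump z := ⟨(1 - ρ') / 8, (1 - ρ') / 4, by linarith, by linarith⟩
  set g : RN (n + m) → ℂ := fun y => ((b y : ℝ) : ℂ) with hg
  have gsm : ContDiff ℝ (⊤ : ℕ∞) g := Complex.ofRealCLM.contDiff.comp b.contDiff
  have gts : tsupport g ⊆ closedBall z ((1 - ρ') / 4) := by
    have : tsupport g ⊆ tsupport b := closure_mono (fun x hx => by
      intro h0; apply hx; simp [hg, h0])
    rwa [b.tsupport_eq] at this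
  have gt : IsTest g := ⟨gsm, (isCompact_closedBall _ _).of_isClosed_subset (isClosed_tsupport _) gts⟩
  have zn : ‖z‖ = (1 + ρ') / 2 := by
    rw [hz, PiLp.norm_single, Real.norm_eq_abs, abs_of_nonneg (by linarith)]
  have loc1 : ∀ x ∈ closedBall z ((1 - ρ') / 4), ‖x‖ ≤ (3 + ρ') / 4 := by
    intro x hx
    rw [mem_closedBall, dist_eq_norm] at hx
    have := norm_add_le (x - z) z
    rw [sub_add_cancel] at this
    linarith
  have loc2 : ∀ x ∈ closedBall z ((1 - ρ') / 4), ρ' ≤ x I0 := by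
    intro x hx
    rw [mem_closedBall, dist_eq_norm] at hx
    have := (PiLp.norm_apply_le (x - z) I0).trans hx
    rw [Real.norm_eq_abs] at this
    have h3 := (abs_le.1 this).1
    simp [hz] at h3
    linarith
  have loc3 : ∀ x ∈ closedBall z ((1 - ρ') / 4), φ x = 0 := by
    intro x hx
    by_contra hn
    have h3 := hs (subset_tsupport _ hn)
    simp at h3
    have h4 := loc2 x hx
    have h5 := (le_abs_self _).trans (PiLp.norm_apply_le x I0)
    linarith
  have gz : ∀ c : Fin (n + m) → ℂ, ∀ x, x ∉ closedBall z ((1 - ρ') / 4) → vf c g x = 0 := by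
    intro c x hx
    by_contra hn
    exact hx (gts (vf_tsupport c g (subset_tsupport _ hn)))
  have cg : CC (fun x => √(∑ j, ‖vf (normCoeff a j) g x‖ ^ 2)) :=
    CC.sqrt_sum fun j => (vf_test _ gt).cc
  set J := ∫ x, √(∑ j, ‖vf (normCoeff a j) g x‖ ^ 2) ^ q with hJ
  have hJ0 : 0 < J := by
    obtain ⟨x, hx⟩ := g_ne (normCoeff a i0) I0 (nc_same a i0) z b
    have cq := cg.rpow hq
    refine CC.int_pos cq (fun y => Real.rpow_nonneg (Real.sqrt_nonneg _) _) x ?_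
    have : 0 < ∑ j, ‖vf (normCoeff a j) g x‖ ^ 2 := by
      refine Finset.sum_pos' (fun j _ => by positivity) ⟨i0, Finset.mem_univ _, ?_⟩
      have := norm_pos_iff.2 hx
      positivity
    exact (Real.rpow_pos_of_pos (Real.sqrt_pos.2 this) _).ne'
  have hMpos : 0 < M := by linarith
  set P := ∫ x, ‖φ x‖ ^ q with hP
  have hP0 : 0 ≤ P := integral_nonneg fun x => by positivity
  have hMq : 0 ≤ 1 - (M⁻¹) ^ q := by
    have := Real.rpow_le_one (by positivity) (inv_le_one_of_one_le₀ hM) hq.le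
    linarith
  set σ : ℝ := ((1 - (M⁻¹) ^ q) * P / J) ^ q⁻¹ with hσ
  have hσ0 : 0 ≤ σ := by positivity
  have hσq : σ ^ q = (1 - (M⁻¹) ^ q) * P / J := by
    rw [hσ, Real.rpow_inv_rpow (by positivity) hq.ne']
  have csm : ContDiff ℝ (⊤ : ℕ∞) (fun y => conj (φ y)) := Complex.conjCLE.contDiff.comp hφ.1
  have wsm1 : ∀ j : Fin n, ContDiff ℝ (⊤ : ℕ∞) (fun x => ((if j = i1 then 1 else 0) / M : ℂ) * conj (φ x)) :=
    fun j => contDiff_const.mul csm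
  have wsm2 : ∀ j : Fin n, ContDiff ℝ (⊤ : ℕ∞) (fun x => (σ : ℂ) * vf (normCoeff a j) g x) :=
    fun j => contDiff_const.mul (vf_smooth _ gsm)
  refine ⟨fun j x => ((if j = i1 then 1 else 0) / M : ℂ) * conj (φ x) + (σ : ℂ) * vf (normCoeff a j) g x,
    fun j => (wsm1 j).add (wsm2 j), ?_, ?_, ?_, ?_⟩
  · intro j
    have : tsupport (fun x => ((if j = i1 then 1 else 0) / M : ℂ) * conj (φ x) + (σ : ℂ) * vf (normCoeff a j) g x) ⊆
        tsupport φ ∪ closedBall z ((1 - ρ') / 4) := by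
      refine closure_minimal (fun x hx => ?_) ((isClosed_tsupport _).union isClosed_closedBall)
      by_contra hn
      rw [Set.mem_union, not_or] at hn
      apply hx
      simp [gz _ x hn.2, image_eq_zero_of_notMem_tsupport hn.1]
    refine this.trans (Set.union_subset (hs.trans (ball_subset_ball (by linarith))) fun x hx => ?_)
    have := loc1 x hx
    rw [mem_ball_zero_iff]; linarith
  · intro x
    by_cases hx : x ∈ closedBall z ((1 - ρ') / 4)
    · right
      exact ⟨(loc2 x hx).trans (le_abs_self _), loc3 x hx, by linarith [loc1 x hx]⟩
    · left
      intro j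
      beta_reduce
      rw [gz _ x hx]
      split_ifs <;> simp; ring
  · have e : ∀ x, √(∑ j, ‖((if j = i1 then 1 else 0) / M : ℂ) * conj (φ x) + (σ : ℂ) * vf (normCoeff a j) g x‖ ^ 2) ^ q =
        (M⁻¹) ^ q * ‖φ x‖ ^ q + σ ^ q * √(∑ j, ‖vf (normCoeff a j) g x‖ ^ 2) ^ q := by
      intro x
      by_cases hx : x ∈ closedBall z ((1 - ρ') / 4)
      · rw [loc3 x hx]
        simp only [map_zero, mul_zero, zero_add, norm_mul, mul_pow, norm_zero, Real.zero_rpow hq.ne']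
        rw [← Finset.mul_sum, Real.sqrt_mul (by positivity), Real.sqrt_sq (norm_nonneg _), Complex.norm_real,
          Real.norm_eq_abs, abs_of_nonneg hσ0, Real.mul_rpow hσ0 (Real.sqrt_nonneg _)]
      · simp only [gz _ x hx, mul_zero, add_zero, norm_mul, mul_pow, norm_zero]
        rw [← Finset.sum_mul, Finset.sum_eq_single i1 (fun j _ hj => by simp [hj]) (by simp)]
        simp only [if_true, RCLike.norm_conj]
        rw [← mul_pow, Real.sqrt_sq (by positivity), Real.mul_rpow (by positivity) (by positivity)]
        simp [abs_of_pos hMpos, Real.zero_rpow hq.ne']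
    simp_rw [e]
    rw [integral_add (CC.int _ ((hφ.cc.norm.rpow hq).const_mul _)) (CC.int _ ((cg.rpow hq).const_mul _)),
      integral_const_mul, integral_const_mul, ← hP, ← hJ, hσq]
    field_simp
    ring
  · intro i j x
    rw [vf_add _ (wsm1 _) (wsm2 _), vf_add _ (wsm1 _) (wsm2 _), vf_const_mul _ _ csm, vf_const_mul _ _ csm,
      vf_const_mul _ _ (vf_smooth _ gsm), vf_const_mul _ _ (vf_smooth _ gsm), vf_comm (normCoeff a i) (normCoeff a j) gsm]
    ring

lemma curl_bound (n N : ℕ) (c : Fin n → Fin N → ℂ) (i1 : Fin n) (q : ℝ) (hq : 1 ≤ q) (C : ℝ) (hC : 0 ≤ C)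
    (hCi : ∀ (c : Fin N → ℂ) (φ : RN N → ℂ), IsTest φ →
      ∫ x, ‖vf (fun i => conj (c i)) φ x‖ ^ q ≤ C * ∫ x, ‖vf c φ x‖ ^ q)
    (M : ℝ) (hM0 : 0 < M) (hM : (n : ℝ) ^ q * C ≤ M ^ q) (φ : RN N → ℂ) (hφ : IsTest φ)
    (A : Fin n → Fin n → RN N → ℂ) (hA : ∀ i j, CC (A i j))
    (hAe : ∀ i j x, A i j x =
        (if j = i1 then 1 else 0) * (vf (c i) (fun y => conj (φ y)) x / M) -
        (if i = i1 then 1 else 0) * (vf (c j) (fun y => conj (φ y)) x / M)) :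
    ∫ x, √(∑ ij : Fin n × Fin n, ‖A ij.1 ij.2 x‖ ^ 2) ^ q ≤
      2 ^ q * ∫ x, √(∑ j, ‖vf (c j) φ x‖ ^ 2) ^ q := by
  have hq0 : 0 < q := by linarith
  set L := fun i x => ‖vf (fun l => conj (c i l)) φ x‖ with hL
  have cL : ∀ i, CC (L i) := fun i => (vf_test _ hφ).cc.norm
  have cv : CC (fun x => √(∑ j, ‖vf (c j) φ x‖ ^ 2)) := CC.sqrt_sum fun j => (vf_test _ hφ).cc
  have e1 : ∀ i x, ‖vf (c i) (fun y => conj (φ y)) x‖ = L i x := fun i x => by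
    rw [vf_conj_fun, RCLike.norm_conj]
  have h1 : ∀ x, √(∑ ij : Fin n × Fin n, ‖A ij.1 ij.2 x‖ ^ 2) ≤ (2 / M) * ∑ i, |L i x| := by
    intro x
    refine (sqrt_sum_le _ (fun _ => norm_nonneg _)).trans ?_
    have : ∀ i j, ‖A i j x‖ ≤ (if j = i1 then L i x / M else 0) + (if i = i1 then L j x / M else 0) := by
      intro i j
      rw [hAe]
      refine (norm_sub_le _ _).trans (le_of_eq ?_)
      rw [norm_mul, norm_mul, norm_div, norm_div, e1, e1, Complex.norm_real, Real.norm_eq_abs, abs_of_pos hM0]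
      split_ifs <;> simp
    rw [Fintype.sum_prod_type]
    refine (Finset.sum_le_sum fun i _ => Finset.sum_le_sum fun j _ => this i j).trans (le_of_eq ?_)
    simp only [Finset.sum_add_distrib, Finset.sum_ite_eq', Finset.mem_univ, if_true]
    have e2 : ∀ i, (∑ j, if i = i1 then L j x / M else 0) = if i = i1 then ∑ j, L j x / M else 0 := fun i => by
      split_ifs <;> simp
    simp only [e2, Finset.sum_ite_eq', Finset.mem_univ, if_true]
    have e3 : ∀ i, |L i x| = L i x := fun i => abs_of_nonneg (norm_nonneg _)
    simp only [e3, ← Finset.sum_div]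
    ring
  have h2 : ∫ x, √(∑ ij : Fin n × Fin n, ‖A ij.1 ij.2 x‖ ^ 2) ^ q ≤
      ∫ x, (2 / M) ^ q * ((n : ℝ) ^ (q - 1) * ∑ i, L i x ^ q) := by
    apply integral_mono
    · exact CC.int _ ((CC.sqrt_sum fun ij : Fin n × Fin n => hA ij.1 ij.2).rpow hq0)
    · exact CC.int _ (((CC.sum Finset.univ fun i => (cL i).rpow hq0).const_mul _).const_mul _)
    · intro x
      refine (Real.rpow_le_rpow (Real.sqrt_nonneg _) (h1 x) hq0.le).trans ?_
      rw [Real.mul_rpow (by positivity) (Finset.sum_nonneg fun _ _ => abs_nonneg _)]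
      refine mul_le_mul_of_nonneg_left ?_ (by positivity)
      have := Real.rpow_sum_le_const_mul_sum_rpow Finset.univ (fun i => L i x) hq
      have e3 : ∀ i, |L i x| = L i x := fun i => abs_of_nonneg (norm_nonneg _)
      simpa [e3] using this
  refine h2.trans ?_
  rw [integral_const_mul, integral_const_mul, integral_finsetSum _ (fun k _ => ((cL k).rpow hq0).int _)]
  set Q := ∫ x, √(∑ j, ‖vf (c j) φ x‖ ^ 2) ^ q with hQ
  have hQ0 : 0 ≤ Q := integral_nonneg fun x => by positivity
  have h3 : ∀ i, ∫ x, L i x ^ q ≤ C * Q := by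
    intro i
    refine (hCi (c i) φ hφ).trans (mul_le_mul_of_nonneg_left ?_ hC)
    apply integral_mono
    · exact CC.int _ ((vf_test _ hφ).cc.norm.rpow hq0)
    · exact CC.int _ (cv.rpow hq0)
    · intro x
      refine Real.rpow_le_rpow (norm_nonneg _) (Real.le_sqrt_of_sq_le ?_) hq0.le
      exact Finset.single_le_sum (f := fun j => ‖vf (c j) φ x‖ ^ 2) (fun j _ => by positivity) (Finset.mem_univ i)
  have hn : (0 : ℝ) < n := by
    have := i1.pos; exact_mod_cast this
  calc _ ≤ (2 / M) ^ q * ((n : ℝ) ^ (q - 1) * ∑ i : Fin n, C * Q) := by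
        refine mul_le_mul_of_nonneg_left (mul_le_mul_of_nonneg_left (Finset.sum_le_sum fun i _ => h3 i) (by positivity)) (by positivity)
    _ = (2 / M) ^ q * ((n : ℝ) ^ q * C) * Q := by
        have : (n : ℝ) ^ q = (n : ℝ) ^ (q - 1) * n := by
          conv_lhs => rw [show q = (q - 1) + 1 by ring, Real.rpow_add hn, Real.rpow_one]
        rw [this]; simp; ring
    _ ≤ (2 / M) ^ q * M ^ q * Q := by gcongr
    _ = 2 ^ q * Q := by
        rw [← Real.mul_rpow (by positivity) hM0.le, div_mul_cancel₀ _ hM0.ne']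

end final
/-- Lemma 5.1, second part. Every `φ ∈ C_c^∞(B(0,1))` can be
written as `φ = V₂ ⋅ W₂` with `supp W₂ ⊂ B(0,1)`, `supp V₂ ⊂ B(0,2)`,
`div_{L*} V₂ = 0`, `‖V₂‖_{L^p} ≤ C₂` (with `C₂` independent of `φ`),
`‖W₂‖_{L^{p'}} = ‖φ‖_{L^{p'}}` and `‖curl_L W₂‖_{L^{p'}} ≤ 2 ‖∇_L φ‖_{L^{p'}}`. -/
theorem statement17 (n m : ℕ) (hn : 2 ≤ n) (a : Fin n → Fin m → ℂ)
    (p p' : ℝ≥0∞) (hp : 1 < p) (hptop : p ≠ ⊤) (hpp' : 1 / p + 1 / p' = 1) :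
    ∃ C₂ : ℝ≥0, 0 < C₂ ∧
      ∀ φf : RN (n + m) → ℂ, IsTest φf → tsupport φf ⊆ ball 0 1 →
        ∃ V W : Fin n → RN (n + m) → ℂ,
          (∀ k, ContDiff ℝ (⊤ : ℕ∞) (V k)) ∧ (∀ k, ContDiff ℝ (⊤ : ℕ∞) (W k)) ∧
          (∀ x, ∑ k, V k x * conj (W k x) = φf x) ∧
          (∀ k, tsupport (W k) ⊆ ball 0 1) ∧
          (∀ k, tsupport (V k) ⊆ ball 0 2) ∧
          (∀ x, ∑ k, vfStar (normCoeff a k) (V k) x = 0) ∧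
          vLpNorm V p ≤ C₂ ∧
          vLpNorm W p' = eLpNorm φf p' volume ∧
          mLpNorm (fun i j x =>
              vf (normCoeff a i) (W j) x - vf (normCoeff a j) (W i) x) p' ≤
            2 * vLpNorm (fun k => vf (normCoeff a k) φf) p' := by
  obtain ⟨hp'0, hp't, hqr⟩ := conj_exp hp hptop hpp'
  set q := p'.toReal with hqdef
  have hq1 : 1 < q := hqr.lt
  have hq0 : 0 < q := by linarith
  obtain ⟨C, hC, hCi⟩ := vf_ineq (n + m) q p.toReal hqr
  have hn' : (2 : ℝ) ≤ n := by exact_mod_cast hn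
  set M : ℝ := n * (C + 1) ^ q⁻¹ with hMdef
  have hM1 : 1 ≤ M := by
    have : 1 ≤ (C + 1) ^ q⁻¹ := Real.one_le_rpow (by linarith) (by positivity)
    nlinarith
  have hMq : (n : ℝ) ^ q * C ≤ M ^ q := by
    rw [hMdef, Real.mul_rpow (by positivity) (by positivity), Real.rpow_inv_rpow (by positivity) hq0.ne']
    exact mul_le_mul_of_nonneg_left (by linarith) (by positivity)
  set i0 : Fin n := ⟨0, by omega⟩ with hi0
  set i1 : Fin n := ⟨1, by omega⟩ with hi1
  have hne : i0 ≠ i1 := by simp [hi0, hi1]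
  obtain ⟨C₂, hC₂, hV⟩ := exists_V n m a i0 i1 hne p M (by linarith)
  refine ⟨C₂, hC₂, fun φ hφ hsupp => ?_⟩
  obtain ⟨ρ, ⟨hρ0, hρ1⟩, hρ⟩ := exists_pos_lt_subset_ball one_pos (isClosed_tsupport φ) hsupp
  obtain ⟨V, V1, V2, V3, V4, V5, V6⟩ := hV ρ ((1 + ρ) / 2) hρ0 (by linarith)
  obtain ⟨W, W1, W2, W3, W4, W5⟩ := exists_W n m a i0 i1 q hq0 M hM1 ρ ((1 + ρ) / 2) hρ0 (by linarith) (by linarith) φ hφ hρ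
  have hMc : (M : ℂ) ≠ 0 := by
    have : M ≠ 0 := by linarith
    exact_mod_cast this
  have Wt : ∀ k, IsTest (W k) := fun k => ⟨W1 k,
    (isCompact_closedBall (0 : RN (n + m)) 1).of_isClosed_subset (isClosed_tsupport _)
      ((W2 k).trans ball_subset_closedBall)⟩
  refine ⟨V, W, V1, W1, ?_, W2, V2, V3, V4, ?_, ?_⟩
  · intro x
    rcases W3 x with h | ⟨h1, h2, h3⟩
    · rw [Finset.sum_eq_single i1 (fun j _ hj => by simp [h j, hj]) (by simp), h i1, if_pos rfl]
      by_cases hx : φ x = 0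
      · simp [hx]
      · have := hρ (subset_tsupport _ hx)
        rw [mem_ball_zero_iff] at this
        rw [V5 x (by linarith) this.le i1, if_pos rfl]
        simp
        field_simp
    · rw [h2]
      exact Finset.sum_eq_zero fun j _ => by rw [V6 x h3 h1 j, zero_mul]
  · rw [vLp_eq, CC.eLp (CC.sqrt_sum fun j => (Wt j).cc) p' hp'0 hp't, CC.eLp hφ.cc p' hp'0 hp't]
    simp only [Real.norm_eq_abs, abs_of_nonneg (Real.sqrt_nonneg _), ← hqdef, W4]
  · have hA : ∀ i j, CC (fun x => vf (normCoeff a i) (W j) x - vf (normCoeff a j) (W i) x) := fun i j =>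
      (vf_test _ (Wt j)).cc.sub (vf_test _ (Wt i)).cc
    have key := curl_bound n (n + m) (normCoeff a) i1 q hq1.le C hC hCi M (by linarith) hMq φ hφ _ hA W5
    rw [mLp_eq, vLp_eq, CC.eLp (CC.sqrt_sum fun ij : Fin n × Fin n => hA ij.1 ij.2) p' hp'0 hp't,
      CC.eLp (CC.sqrt_sum fun j => (vf_test _ hφ).cc) p' hp'0 hp't]
    simp only [Real.norm_eq_abs, abs_of_nonneg (Real.sqrt_nonneg _), ← hqdef]
    apply ofReal_le_two_mul
    refine (Real.rpow_le_rpow (integral_nonneg fun x => by positivity) key (by positivity)).trans (le_of_eq ?_)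
    rw [Real.mul_rpow (by positivity) (integral_nonneg fun x => by positivity), Real.rpow_rpow_inv (by norm_num) hq0.ne']
end
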